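/- Let 0 < T ≤ ∞, let γ ∈ (0, 1/4), and let u be a smooth function on (0,T) × ℝⁿ solving the heat equation ∂ₜu = Δu. Suppose (i) for all 0 < a < b < T there exists C(a,b) > 0 such that for every R > 0, (∫ₐᵇ ∫_{B(0,R)} |u(t,x)|² dt dx)^{1/2} ≤ C(a,b)·exp(γR²/(b−a)); and (ii) there exists a sequence (t_k) of times in (0,T) tending to 0 such that the sequence of tempered distributions (u(t_k)) is bounded in 𝒮′(ℝⁿ), i.e. for every Schwartz function φ the sequence (⟨u(t_k), φ⟩) is bounded. Then there exists a unique tempered distribution u₀ ∈ 𝒮′(ℝⁿ) such that u(t) = e^{tΔ}u₀ for all 0 < t < T, where the heat semigroup acts on 𝒮′(ℝⁿ) by duality. -/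

import Mathlib

open MeasureTheory Metric Filter Set
open scoped Real ENNReal Topology

noncomputable section

abbrev ES (n : ℕ) := EuclideanSpace ℝ (Fin n)

/-- The heat semigroup `e^{tΔ}` applied to a function `h`:
`(e^{tΔ}h)(x) = ∫ (4πt)^{-n/2} exp(-|x-y|²/(4t)) h(y) dy`. -/
def heatOp (n : ℕ) (t : ℝ) (h : ES n → ℝ) (x : ES n) : ℝ :=
  ∫ y : ES n, (4 * Real.pi * t) ^ (-(n : ℝ) / 2) * Real.exp (-‖x - y‖ ^ 2 / (4 * t)) * h y

/-- The Laplacian of `f`, as the sum of its second partial derivatives. -/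
def heatLap (n : ℕ) (f : ES n → ℝ) (x : ES n) : ℝ :=
  ∑ i : Fin n,
    fderiv ℝ (fun y => fderiv ℝ f y (EuclideanSpace.single i 1)) x (EuclideanSpace.single i 1)

/-!
Let `s < t` in `(0, T)` and let `χ_R` be a cutoff at scale `R`. Pairing `u` with the backward heat
kernel `G(τ, y) = heatKernel (t - τ) (x - y)` times `χ_R`, Green's identity gives
`e^{(t-b)Δ}(u(b) χ_R)(x) - e^{(t-s)Δ}(u(s) χ_R)(x) = ∫_s^b ∫ u [Δ, χ_R] G`. The commutator lives on
the shell `κR ≤ |y| ≤ R`, where `G` and `∇G` are `O(exp (-κ⁵ R² / (4(t - s))))` uniformly in `τ`,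
while the `L²` norm of `u` there is `O(exp (γ R² / (t - s)))`. As `4γ < 1`, one can choose `κ < 1`
with `4γ < κ⁵`, so letting `b → t` and then `R → ∞` gives `u(t) = e^{(t-s)Δ} u(s)`.

By duality `⟨u(t), φ⟩ = ⟨u(t_k), e^{(t-t_k)Δ} φ⟩` whenever `t_k < t`. Since `𝒮` is barrelled, the
pointwise bounded sequence `u(t_k)` is equicontinuous, so `⟨u(t_k), e^{tΔ} φ⟩ → ⟨u(t), φ⟩`. The
functions `e^{tΔ} φ` are dense in `𝒮`, and equicontinuity makes `u(t_k)` converge pointwise on all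
of `𝒮`; the limit is `u₀`, and density also gives uniqueness.
-/

open scoped SchwartzMap ContDiff Gradient

section SchwartzSeries

variable {E F : Type*} [NormedAddCommGroup E] [NormedSpace ℝ E]
  [NormedAddCommGroup F] [NormedSpace ℝ F]

lemma schwartz_tendsto_nhds_iff {ι : Type*} {l : Filter ι} {f : ι → 𝓢(E, F)} {g : 𝓢(E, F)} :
    Tendsto f l (𝓝 g) ↔
      ∀ k m, Tendsto (fun i => SchwartzMap.seminorm ℝ k m (f i - g)) l (𝓝 0) := by
  refine ⟨fun h k m => ?_, fun h => ?_⟩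
  · have hcont := (schwartz_withSeminorms ℝ E F).continuous_seminorm (k, m)
    have hzero := hcont.tendsto 0
    rw [map_zero] at hzero
    exact hzero.comp (tendsto_sub_nhds_zero_iff.2 h)
  · rw [(schwartz_withSeminorms ℝ E F).tendsto_nhds]
    exact fun p ε hε => (h p.1 p.2).eventually (gt_mem_nhds hε)

variable [CompleteSpace F] {ι : Type*}

lemma norm_pow_mul_iteratedFDeriv_tsum_le {g : ι → 𝓢(E, F)}
    (hg : ∀ k m, Summable fun i => SchwartzMap.seminorm ℝ k m (g i)) (k m : ℕ) (x : E) :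
    ‖x‖ ^ k * ‖iteratedFDeriv ℝ m (fun y => ∑' i, g i y) x‖ ≤
      ∑' i, SchwartzMap.seminorm ℝ k m (g i) := by
  have hbound : ∀ (m : ℕ) (i : ι) (x : E), (m : ℕ∞) ≤ (⊤ : ℕ∞) →
      ‖iteratedFDeriv ℝ m (g i) x‖ ≤ SchwartzMap.seminorm ℝ 0 m (g i) :=
    fun m i x _ => SchwartzMap.norm_iteratedFDeriv_le_seminorm ℝ (g i) m x
  have hsum : Summable fun i => ‖iteratedFDeriv ℝ m (g i) x‖ :=
    .of_nonneg_of_le (fun _ => norm_nonneg _) (fun i => hbound m i x le_top) (hg 0 m)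
  rw [iteratedFDeriv_tsum_apply (N := ⊤) (fun i => (g i).smooth ⊤) (fun m _ => hg 0 m) hbound
    le_top x]
  calc ‖x‖ ^ k * ‖∑' i, iteratedFDeriv ℝ m (g i) x‖
      ≤ ‖x‖ ^ k * ∑' i, ‖iteratedFDeriv ℝ m (g i) x‖ := by
        gcongr; exact norm_tsum_le_tsum_norm hsum
    _ = ∑' i, ‖x‖ ^ k * ‖iteratedFDeriv ℝ m (g i) x‖ := tsum_mul_left.symm
    _ ≤ ∑' i, SchwartzMap.seminorm ℝ k m (g i) :=
        (hsum.mul_left _).tsum_le_tsum (fun i => SchwartzMap.le_seminorm ℝ k m (g i) x) (hg k m)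

/-- The pointwise sum of a family of Schwartz functions all of whose seminorms are summable. -/
def schwartzTsum (g : ι → 𝓢(E, F))
    (hg : ∀ k m, Summable fun i => SchwartzMap.seminorm ℝ k m (g i)) : 𝓢(E, F) where
  toFun x := ∑' i, g i x
  smooth' := contDiff_tsum (N := ⊤) (fun i => (g i).smooth ⊤) (fun m _ => hg 0 m)
    fun m i x _ => SchwartzMap.norm_iteratedFDeriv_le_seminorm ℝ (g i) m x
  decay' k m := ⟨_, norm_pow_mul_iteratedFDeriv_tsum_le hg k m⟩

lemma seminorm_schwartzTsum_le {g : ι → 𝓢(E, F)}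
    (hg : ∀ k m, Summable fun i => SchwartzMap.seminorm ℝ k m (g i)) (k m : ℕ) :
    SchwartzMap.seminorm ℝ k m (schwartzTsum g hg) ≤ ∑' i, SchwartzMap.seminorm ℝ k m (g i) :=
  SchwartzMap.seminorm_le_bound ℝ k m _ (tsum_nonneg fun _ => apply_nonneg _ _)
    (norm_pow_mul_iteratedFDeriv_tsum_le hg k m)

lemma hasSum_schwartzTsum {g : ι → 𝓢(E, F)}
    (hg : ∀ k m, Summable fun i => SchwartzMap.seminorm ℝ k m (g i)) :
    HasSum g (schwartzTsum g hg) := by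
  refine schwartz_tendsto_nhds_iff.2 fun k m => ?_
  refine squeeze_zero (fun s => apply_nonneg _ _) (fun s => ?_)
    (tendsto_tsum_compl_atTop_zero fun i => SchwartzMap.seminorm ℝ k m (g i))
  have htail : schwartzTsum g hg - ∑ i ∈ s, g i =
      schwartzTsum (fun i : {i // i ∉ s} => g i) fun k m => (hg k m).subtype _ := by
    ext x
    have hsum : Summable fun i => g i x :=
      .of_norm_bounded (hg 0 0) fun i => SchwartzMap.norm_le_seminorm ℝ (g i) x
    have hsplit := hsum.sum_add_tsum_subtype_compl s
    simp only [sub_apply, sum_apply]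
    exact sub_eq_of_eq_add' hsplit.symm
  rw [← neg_sub, map_neg_eq_map, htail]
  exact seminorm_schwartzTsum_le _ k m

lemma exists_tendsto_of_summable_seminorm_sub {f : ℕ → 𝓢(E, F)}
    (hf : ∀ k m, Summable fun i => SchwartzMap.seminorm ℝ k m (f (i + 1) - f i)) :
    ∃ g, Tendsto f atTop (𝓝 g) := by
  have hlim := (hasSum_schwartzTsum hf).tendsto_sum_nat.const_add (f 0)
  simp only [Finset.sum_range_sub, add_sub_cancel] at hlim
  exact ⟨_, hlim⟩

instance instCompleteSpaceSchwartz : CompleteSpace 𝓢(E, F) := by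
  have : (uniformity 𝓢(E, F)).IsCountablyGenerated :=
    IsUniformAddGroup.uniformity_countably_generated
  let p (N : ℕ) : Seminorm ℝ 𝓢(E, F) := (Finset.Iic (N, N)).sup (schwartzSeminormFamily ℝ E F)
  refine UniformSpace.complete_of_convergent_controlled_sequences
    (fun N => {q | q.2 - q.1 ∈ (p N).ball 0 ((1 / 2) ^ N)}) (fun N => ?_) fun f hf => ?_
  · rw [uniformity_eq_comap_nhds_zero]
    exact ⟨_, ((schwartz_withSeminorms ℝ E F).mem_nhds_iff 0 _).2 ⟨_, _, by positivity, subset_rfl⟩,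
      fun q hq => hq⟩
  · refine exists_tendsto_of_summable_seminorm_sub fun k m => ?_
    refine .of_norm_bounded_eventually_nat summable_geometric_two ?_
    filter_upwards [eventually_ge_atTop (max k m)] with i hi
    have hsmall := hf i i (i + 1) le_rfl (Nat.le_succ i)
    simp only [mem_ofPred_eq, Seminorm.mem_ball, sub_zero] at hsmall
    have hle : schwartzSeminormFamily ℝ E F (k, m) ≤ p i :=
      Finset.le_sup (Finset.mem_Iic.2 ⟨le_of_max_le_left hi, le_of_max_le_right hi⟩)
    rw [Real.norm_of_nonneg (apply_nonneg _ _)]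
    exact (hle _).trans hsmall.le

instance instBarrelledSpaceSchwartz : BarrelledSpace ℝ 𝓢(E, F) := by
  have : (uniformity 𝓢(E, F)).IsCountablyGenerated :=
    IsUniformAddGroup.uniformity_countably_generated
  infer_instance

end SchwartzSeries

section Limits

lemma equicontinuousAt_cauchy_map_of_mem_closure {ι X α : Type*} [TopologicalSpace X]
    [UniformSpace α] {l : Filter ι} [l.NeBot] {F : ι → X → α} {s : Set X} {x : X}
    (hF : EquicontinuousAt F x) (hs : ∀ y ∈ s, Cauchy (map (F · y) l)) (hx : x ∈ closure s) :
    Cauchy (map (F · x) l) := by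
  refine cauchy_map_iff.2 ⟨inferInstance, fun U hU => ?_⟩
  obtain ⟨V, hV, hVsymm, hVU⟩ := comp_comp_symm_mem_uniformity_sets hU
  obtain ⟨y, hFy, hys⟩ := mem_closure_iff_nhds.1 hx _ (hF V hV)
  have hcauchy : ∀ᶠ ij in l ×ˢ l, (F ij.1 y, F ij.2 y) ∈ V := (cauchy_map_iff.1 (hs y hys)).2 hV
  exact hcauchy.mono fun ij hij => hVU ⟨_, ⟨_, hFy ij.1, hij⟩, hVsymm.symm _ _ (hFy ij.2)⟩

variable {E : Type*} [AddCommGroup E] [Module ℝ E] [UniformSpace E] [IsUniformAddGroup E]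
  [ContinuousSMul ℝ E] [BarrelledSpace ℝ E]

lemma uniformEquicontinuous_of_forall_abs_le {ι : Type*} {L : ι → E →L[ℝ] ℝ}
    (hbdd : ∀ x, ∃ A, ∀ i, |L i x| ≤ A) : UniformEquicontinuous ((↑) ∘ L : ι → E → ℝ) :=
  (norm_withSeminorms ℝ ℝ).banach_steinhaus fun _ x =>
    (hbdd x).imp fun _ hA => forall_mem_range.2 hA

lemma tendsto_apply_sub_apply_of_forall_abs_le {ι : Type*} {l : Filter ι} {L : ι → E →L[ℝ] ℝ}
    (hbdd : ∀ x, ∃ A, ∀ i, |L i x| ≤ A) {x : ι → E} {a : E} (hx : Tendsto x l (𝓝 a)) :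
    Tendsto (fun i => L i (x i) - L i a) l (𝓝 0) := by
  refine Metric.tendsto_nhds.2 fun ε hε => ?_
  have hnear := (uniformEquicontinuous_of_forall_abs_le hbdd).equicontinuous a _
    (dist_mem_uniformity hε)
  filter_upwards [hx.eventually hnear] with i hi
  rw [dist_zero_right, ← dist_eq_norm, dist_comm]
  exact hi i

lemma exists_clm_tendsto_of_dense {L : ℕ → E →L[ℝ] ℝ} {s : Set E} (hs : Dense s)
    (hbdd : ∀ x, ∃ A, ∀ k, |L k x| ≤ A) (hlim : ∀ x ∈ s, ∃ a, Tendsto (L · x) atTop (𝓝 a)) :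
    ∃ L₀ : E →L[ℝ] ℝ, ∀ x, Tendsto (L · x) atTop (𝓝 (L₀ x)) := by
  have hconv (x : E) : ∃ a, Tendsto (L · x) atTop (𝓝 a) :=
    cauchy_map_iff_exists_tendsto.1 <| equicontinuousAt_cauchy_map_of_mem_closure
      ((uniformEquicontinuous_of_forall_abs_le hbdd).equicontinuous x)
      (fun y hy => (hlim y hy).elim fun _ h => h.cauchy_map) (hs x)
  choose f hf using hconv
  exact ⟨continuousLinearMapOfTendsto L (tendsto_pi_nhds.2 hf), hf⟩

end Limits

section Pairing

variable {E : Type*} [NormedAddCommGroup E] [NormedSpace ℝ E] [MeasurableSpace E]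
  [OpensMeasurableSpace E] {μ : Measure E} {v : E → ℝ}

lemma integrable_mul_schwartz (hv : Integrable v μ) (φ : 𝓢(E, ℝ)) :
    Integrable (fun x => v x * φ x) μ :=
  hv.mul_bdd φ.continuous.aestronglyMeasurable
    (.of_forall fun x => SchwartzMap.norm_le_seminorm ℝ φ x)

/-- The tempered distribution `φ ↦ ∫ v φ dμ` attached to an integrable function `v`. -/
def integralPairing (μ : Measure E) (v : E → ℝ) (hv : Integrable v μ) : 𝓢(E, ℝ) →L[ℝ] ℝ :=
  SchwartzMap.mkCLMtoNormedSpace (fun φ => ∫ x, v x * φ x ∂μ)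
    (fun φ ψ => by
      simp only [add_apply, mul_add]
      exact integral_add (integrable_mul_schwartz hv φ) (integrable_mul_schwartz hv ψ))
    (fun a φ => by
      simp only [smul_apply, smul_eq_mul, mul_left_comm, integral_const_mul, RingHom.id_apply])
    ⟨{(0, 0)}, ∫ x, ‖v x‖ ∂μ, integral_nonneg fun _ => norm_nonneg _, fun φ => by
      rw [Finset.sup_singleton, ← integral_mul_const]
      refine norm_integral_le_of_norm_le (hv.norm.mul_const _) (.of_forall fun x => ?_)
      rw [norm_mul]
      exact mul_le_mul_of_nonneg_left (SchwartzMap.norm_le_seminorm ℝ φ x) (norm_nonneg _)⟩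

lemma exists_clm_eq_integral_mul [ProperSpace E] (hv : LocallyIntegrable v μ)
    (hint : ∀ φ : 𝓢(E, ℝ), Integrable (fun x => v x * φ x) μ) :
    ∃ L : 𝓢(E, ℝ) →L[ℝ] ℝ, ∀ φ, L φ = ∫ x, v x * φ x ∂μ := by
  have hball (N : ℕ) : Integrable v (μ.restrict (closedBall 0 N)) :=
    hv.integrableOn_isCompact (isCompact_closedBall 0 _)
  have hlim (φ : 𝓢(E, ℝ)) : Tendsto (fun N : ℕ => integralPairing _ v (hball N) φ) atTop
      (𝓝 (∫ x, v x * φ x ∂μ)) := by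
    have := tendsto_setIntegral_of_monotone (s := fun N : ℕ => closedBall (0 : E) N)
      (fun N => measurableSet_closedBall)
      (fun a b hab => closedBall_subset_closedBall (by exact_mod_cast hab))
      (hint φ).integrableOn
    rwa [iUnion_closedBall_nat, setIntegral_univ] at this
  exact ⟨continuousLinearMapOfTendsto _ (tendsto_pi_nhds.2 hlim), fun φ => rfl⟩

end Pairing

section SchwartzIntegral

lemma hasFDerivAt_integral_of_forall_apply_eq {E G Z : Type*} [NormedAddCommGroup E]
    [NormedSpace ℝ E] [NormedAddCommGroup G] [NormedSpace ℝ G] [MeasurableSpace Z] {μ : Measure Z}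
    {f : Z → E → G} {f' : Z → E → E →L[ℝ] G} {D : E →L[ℝ] G} {b : Z → ℝ} {x : E}
    (hf : ∀ y, Integrable (fun z => f z y) μ)
    (hf' : AEStronglyMeasurable (fun z => f' z x) μ) (hb : Integrable b μ)
    (hle : ∀ z y, ‖f' z y‖ ≤ b z) (hderiv : ∀ z y, HasFDerivAt (f z) (f' z y) y)
    (hD : ∀ v, D v = ∫ z, f' z x v ∂μ) :
    HasFDerivAt (fun y => ∫ z, f z y ∂μ) D x := by
  refine (hasFDerivAt_integral_of_dominated_of_fderiv_le univ_mem
    (.of_forall fun y => (hf y).1) (hf x) hf' (.of_forall fun z y _ => hle z y) hb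
    (.of_forall fun z y _ => hderiv z y)).congr_fderiv ?_
  ext v
  rw [hD, ContinuousLinearMap.integral_apply (hb.mono' hf' (.of_forall fun z => hle z x))]

variable {E F : Type*} [NormedAddCommGroup E] [NormedSpace ℝ E]
  [NormedAddCommGroup F] [NormedSpace ℝ F]

lemma continuous_iteratedFDeriv_schwartz (m : ℕ) (x : E) :
    Continuous fun φ : 𝓢(E, F) => iteratedFDeriv ℝ m φ x := by
  refine continuous_iff_continuousAt.2 fun φ => tendsto_iff_norm_sub_tendsto_zero.2 ?_
  refine squeeze_zero (fun _ => norm_nonneg _) (fun ψ => ?_)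
    (schwartz_tendsto_nhds_iff.1 tendsto_id 0 m)
  rw [← iteratedFDeriv_sub_apply (ψ.smooth m).contDiffAt (φ.smooth m).contDiffAt]
  exact SchwartzMap.norm_iteratedFDeriv_le_seminorm ℝ (ψ - φ) m x

lemma hasFDerivAt_iteratedFDeriv_schwartz (φ : 𝓢(E, F)) (m : ℕ) (x : E) :
    HasFDerivAt (iteratedFDeriv ℝ m φ) (iteratedFDeriv ℝ (m + 1) φ x).curryLeft x :=
  (φ.smooth ⊤).ftaylorSeries.fderiv m (by exact_mod_cast WithTop.coe_lt_top m) x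

variable {Z : Type*} [TopologicalSpace Z] [SecondCountableTopology Z] [MeasurableSpace Z]
  [OpensMeasurableSpace Z] {μ : Measure Z} {Φ : Z → 𝓢(E, F)}

lemma integrable_iteratedFDeriv_of_integrable_seminorm (hc : Continuous Φ)
    (hΦ : ∀ k m, Integrable (fun z => SchwartzMap.seminorm ℝ k m (Φ z)) μ) (m : ℕ) (x : E) :
    Integrable (fun z => iteratedFDeriv ℝ m (Φ z) x) μ :=
  (hΦ 0 m).mono' ((continuous_iteratedFDeriv_schwartz m x).comp hc).aestronglyMeasurable
    (.of_forall fun z => SchwartzMap.norm_iteratedFDeriv_le_seminorm ℝ (Φ z) m x)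

lemma integrable_apply_of_integrable_seminorm (hc : Continuous Φ)
    (hΦ : ∀ k m, Integrable (fun z => SchwartzMap.seminorm ℝ k m (Φ z)) μ) (x : E) :
    Integrable (fun z => Φ z x) μ :=
  (continuousMultilinearCurryFin0 ℝ E F).toContinuousLinearEquiv.integrable_comp_iff.2
    (integrable_iteratedFDeriv_of_integrable_seminorm hc hΦ 0 x)

lemma hasFTaylorSeriesUpTo_integral_schwartz (hc : Continuous Φ)
    (hΦ : ∀ k m, Integrable (fun z => SchwartzMap.seminorm ℝ k m (Φ z)) μ) :
    HasFTaylorSeriesUpTo (⊤ : ℕ∞) (fun x => ∫ z, Φ z x ∂μ)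
      fun x m => ∫ z, iteratedFDeriv ℝ m (Φ z) x ∂μ := by
  have hint := integrable_iteratedFDeriv_of_integrable_seminorm hc hΦ
  refine (hasFTaylorSeriesUpTo_top_iff' le_rfl).2 ⟨fun x => ?_, fun m x => ?_⟩
  · exact ((continuousMultilinearCurryFin0 ℝ E F).toContinuousLinearEquiv.integral_comp_comm _).symm
  · have hmeas := (continuousMultilinearCurryLeftEquiv ℝ _ F).continuous.comp_aestronglyMeasurable
      (hint (m + 1) x).1
    have hle (z : Z) (y : E) : ‖(iteratedFDeriv ℝ (m + 1) (Φ z) y).curryLeft‖ ≤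
        SchwartzMap.seminorm ℝ 0 (m + 1) (Φ z) :=
      (ContinuousMultilinearMap.curryLeft_norm _).trans_le
        (SchwartzMap.norm_iteratedFDeriv_le_seminorm ℝ (Φ z) (m + 1) y)
    refine hasFDerivAt_integral_of_forall_apply_eq (hint m) hmeas (hΦ 0 (m + 1)) hle
      (fun z y => hasFDerivAt_iteratedFDeriv_schwartz (Φ z) m y) fun v => ?_
    ext w
    rw [ContinuousMultilinearMap.integral_apply
        (((hΦ 0 (m + 1)).mono' hmeas (.of_forall (hle · x))).apply_continuousLinearMap v),
      ContinuousMultilinearMap.curryLeft_apply,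
      ContinuousMultilinearMap.integral_apply (hint (m + 1) x)]
    rfl

lemma norm_pow_mul_iteratedFDeriv_integral_le (hc : Continuous Φ)
    (hΦ : ∀ k m, Integrable (fun z => SchwartzMap.seminorm ℝ k m (Φ z)) μ) (k m : ℕ) (x : E) :
    ‖x‖ ^ k * ‖iteratedFDeriv ℝ m (fun x => ∫ z, Φ z x ∂μ) x‖ ≤
      ∫ z, SchwartzMap.seminorm ℝ k m (Φ z) ∂μ := by
  rw [← (hasFTaylorSeriesUpTo_integral_schwartz hc hΦ).eq_iteratedFDeriv
    (by exact_mod_cast le_top) x, ← norm_norm x, ← norm_pow, ← norm_smul, ← integral_smul]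
  refine norm_integral_le_of_norm_le (hΦ k m) (.of_forall fun z => ?_)
  rw [norm_smul, norm_pow, norm_norm]
  exact SchwartzMap.le_seminorm ℝ k m (Φ z) x

/-- The pointwise integral of a continuous family of Schwartz functions all of whose seminorms are
integrable. -/
def schwartzIntegral (μ : Measure Z) (Φ : Z → 𝓢(E, F)) (hc : Continuous Φ)
    (hΦ : ∀ k m, Integrable (fun z => SchwartzMap.seminorm ℝ k m (Φ z)) μ) : 𝓢(E, F) where
  toFun x := ∫ z, Φ z x ∂μ
  smooth' := (hasFTaylorSeriesUpTo_integral_schwartz hc hΦ).contDiff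
  decay' k m := ⟨_, norm_pow_mul_iteratedFDeriv_integral_le hc hΦ k m⟩

lemma seminorm_schwartzIntegral_le (hc : Continuous Φ)
    (hΦ : ∀ k m, Integrable (fun z => SchwartzMap.seminorm ℝ k m (Φ z)) μ) (k m : ℕ) :
    SchwartzMap.seminorm ℝ k m (schwartzIntegral μ Φ hc hΦ) ≤
      ∫ z, SchwartzMap.seminorm ℝ k m (Φ z) ∂μ :=
  SchwartzMap.seminorm_le_bound ℝ k m _ (integral_nonneg fun _ => apply_nonneg _ _)
    (norm_pow_mul_iteratedFDeriv_integral_le hc hΦ k m)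

lemma schwartzIntegral_sub {Ψ : Z → 𝓢(E, F)} (hcΦ : Continuous Φ)
    (hcΨ : Continuous Ψ) (hΦ : ∀ k m, Integrable (fun z => SchwartzMap.seminorm ℝ k m (Φ z)) μ)
    (hΨ : ∀ k m, Integrable (fun z => SchwartzMap.seminorm ℝ k m (Ψ z)) μ)
    (hsub : ∀ k m, Integrable (fun z => SchwartzMap.seminorm ℝ k m (Φ z - Ψ z)) μ) :
    schwartzIntegral μ Φ hcΦ hΦ - schwartzIntegral μ Ψ hcΨ hΨ =
      schwartzIntegral μ (fun z => Φ z - Ψ z) (hcΦ.sub hcΨ) hsub := by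
  ext x
  exact (integral_sub (integrable_apply_of_integrable_seminorm hcΦ hΦ x)
    (integrable_apply_of_integrable_seminorm hcΨ hΨ x)).symm

lemma tendsto_schwartzIntegral {ι : Type*} {l : Filter ι}
    [l.IsCountablyGenerated] {Ψ : ι → Z → 𝓢(E, F)} (hcΦ : Continuous Φ)
    (hcΨ : ∀ i, Continuous (Ψ i))
    (hΦ : ∀ k m, Integrable (fun z => SchwartzMap.seminorm ℝ k m (Φ z)) μ)
    (hΨ : ∀ i k m, Integrable (fun z => SchwartzMap.seminorm ℝ k m (Ψ i z)) μ)
    {b : ℕ → ℕ → Z → ℝ} (hb : ∀ k m, Integrable (b k m) μ)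
    (hle : ∀ k m, ∀ᶠ i in l, ∀ z, SchwartzMap.seminorm ℝ k m (Ψ i z) ≤ b k m z)
    (hlim : ∀ z, Tendsto (Ψ · z) l (𝓝 (Φ z))) :
    Tendsto (fun i => schwartzIntegral μ (Ψ i) (hcΨ i) (hΨ i)) l
      (𝓝 (schwartzIntegral μ Φ hcΦ hΦ)) := by
  have hmeas (i : ι) (k m : ℕ) :
      AEStronglyMeasurable (fun z => SchwartzMap.seminorm ℝ k m (Ψ i z - Φ z)) μ :=
    (((schwartz_withSeminorms ℝ E F).continuous_seminorm (k, m)).comp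
      ((hcΨ i).sub hcΦ)).aestronglyMeasurable
  have hint (i : ι) (k m : ℕ) :
      Integrable (fun z => SchwartzMap.seminorm ℝ k m (Ψ i z - Φ z)) μ :=
    ((hΨ i k m).add (hΦ k m)).mono' (hmeas i k m) (.of_forall fun z => by
      rw [Real.norm_of_nonneg (apply_nonneg _ _)]
      exact map_sub_le_add _ _ _)
  refine schwartz_tendsto_nhds_iff.2 fun k m => ?_
  have hdom : Tendsto (fun i => ∫ z, SchwartzMap.seminorm ℝ k m (Ψ i z - Φ z) ∂μ) l
      (𝓝 (∫ _, 0 ∂μ)) := by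
    refine tendsto_integral_filter_of_dominated_convergence
      (fun z => b k m z + SchwartzMap.seminorm ℝ k m (Φ z)) (.of_forall fun i => hmeas i k m) ?_
      ((hb k m).add (hΦ k m)) (.of_forall fun z => schwartz_tendsto_nhds_iff.1 (hlim z) k m)
    filter_upwards [hle k m] with i hi
    refine .of_forall fun z => ?_
    rw [Real.norm_of_nonneg (apply_nonneg _ _)]
    exact (map_sub_le_add _ _ _).trans (by gcongr; exact hi z)
  rw [integral_zero] at hdom
  refine squeeze_zero (fun _ => apply_nonneg _ _) (fun i => ?_) hdom
  rw [schwartzIntegral_sub (hcΨ i) hcΦ (hΨ i) hΦ (hint i)]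
  exact seminorm_schwartzIntegral_le _ _ k m

end SchwartzIntegral

section Translation

variable {E F : Type*} [NormedAddCommGroup E] [NormedSpace ℝ E]
  [NormedAddCommGroup F] [NormedSpace ℝ F]

lemma norm_pow_mul_iteratedFDeriv_sub_le (φ : 𝓢(E, F)) (k m : ℕ) (a x : E) :
    ‖x‖ ^ k * ‖iteratedFDeriv ℝ m φ (x - a)‖ ≤
      2 ^ k * (Finset.Iic (k, m)).sup (schwartzSeminormFamily ℝ E F) φ * (1 + ‖a‖) ^ k := by
  have hx : ‖x‖ ≤ (1 + ‖x - a‖) * (1 + ‖a‖) := by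
    have := norm_le_norm_sub_add x a
    nlinarith [mul_nonneg (norm_nonneg (x - a)) (norm_nonneg a)]
  calc ‖x‖ ^ k * ‖iteratedFDeriv ℝ m φ (x - a)‖
      ≤ ((1 + ‖x - a‖) * (1 + ‖a‖)) ^ k * ‖iteratedFDeriv ℝ m φ (x - a)‖ := by gcongr
    _ = (1 + ‖x - a‖) ^ k * ‖iteratedFDeriv ℝ m φ (x - a)‖ * (1 + ‖a‖) ^ k := by
        rw [mul_pow]; ring
    _ ≤ _ := by
        refine mul_le_mul_of_nonneg_right ?_ (by positivity)
        exact SchwartzMap.one_add_le_sup_seminorm_apply (𝕜 := ℝ) (m := (k, m)) le_rfl le_rfl φ _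

lemma iteratedFDeriv_compSubConstCLM (φ : 𝓢(E, F)) (m : ℕ) (a x : E) :
    iteratedFDeriv ℝ m (φ.compSubConstCLM ℝ a) x = iteratedFDeriv ℝ m φ (x - a) :=
  iteratedFDeriv_comp_sub (f := φ) m a x

lemma seminorm_compSubConstCLM_le (φ : 𝓢(E, F)) (k m : ℕ) (a : E) :
    SchwartzMap.seminorm ℝ k m (φ.compSubConstCLM ℝ a) ≤
      2 ^ k * (Finset.Iic (k, m)).sup (schwartzSeminormFamily ℝ E F) φ * (1 + ‖a‖) ^ k :=
  SchwartzMap.seminorm_le_bound ℝ k m _ (by positivity) fun x =>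
    (iteratedFDeriv_compSubConstCLM φ m a x).symm ▸ norm_pow_mul_iteratedFDeriv_sub_le φ k m a x

lemma seminorm_compSubConstCLM_sub_le (φ : 𝓢(E, F)) (k m : ℕ) (a : E) :
    SchwartzMap.seminorm ℝ k m (φ.compSubConstCLM ℝ a - φ) ≤
      2 ^ k * (Finset.Iic (k, m + 1)).sup (schwartzSeminormFamily ℝ E F) φ * (1 + ‖a‖) ^ k *
        ‖a‖ := by
  refine SchwartzMap.seminorm_le_bound ℝ k m _ (by positivity) fun x => ?_
  have hmean := (convex_closedBall x ‖a‖).norm_image_sub_le_of_norm_hasFDerivWithin_le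
    (f := ‖x‖ ^ k • iteratedFDeriv ℝ m φ) (x := x) (y := x - a)
    (C := 2 ^ k * (Finset.Iic (k, m + 1)).sup (schwartzSeminormFamily ℝ E F) φ * (1 + ‖a‖) ^ k)
    (fun y _ => ((hasFDerivAt_iteratedFDeriv_schwartz φ m y).const_smul _).hasFDerivWithinAt)
    (fun y hy => ?_) (mem_closedBall_self (norm_nonneg a)) (by simp)
  · rw [Pi.smul_apply, Pi.smul_apply, ← smul_sub, norm_smul, norm_pow, norm_norm,
      sub_sub_cancel_left, norm_neg] at hmean
    rwa [FunLike.coe_sub, iteratedFDeriv_sub_apply ((SchwartzMap.smooth _ m).contDiffAt)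
      (φ.smooth m).contDiffAt, iteratedFDeriv_compSubConstCLM]
  · rw [norm_smul, norm_pow, norm_norm, ContinuousMultilinearMap.curryLeft_norm, ← sub_sub_self x y]
    refine (norm_pow_mul_iteratedFDeriv_sub_le φ k (m + 1) (x - y) x).trans ?_
    gcongr
    rwa [norm_sub_rev, ← mem_closedBall_iff_norm]

lemma continuous_compSubConstCLM (φ : 𝓢(E, F)) :
    Continuous fun a : E => φ.compSubConstCLM ℝ a := by
  have hzero (ψ : 𝓢(E, F)) : Tendsto (fun a : E => ψ.compSubConstCLM ℝ a) (𝓝 0) (𝓝 ψ) := by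
    refine schwartz_tendsto_nhds_iff.2 fun k m => squeeze_zero (fun _ => apply_nonneg _ _)
      (seminorm_compSubConstCLM_sub_le ψ k m) ?_
    exact Continuous.tendsto' (by fun_prop) _ _ (by simp)
  refine continuous_iff_continuousAt.2 fun a => ?_
  have hshift : Tendsto (fun b => b - a) (𝓝 a) (𝓝 0) := tendsto_sub_nhds_zero_iff.2 tendsto_id
  refine ((hzero (φ.compSubConstCLM ℝ a)).comp hshift).congr fun b => ?_
  rw [Function.comp_apply, SchwartzMap.compSubConstCLM_comp, add_sub_cancel]

lemma seminorm_compSubConstCLM_smul_le (φ : 𝓢(E, F)) (k m : ℕ) {c C : ℝ} (hc : |c| ≤ C) (z : E) :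
    SchwartzMap.seminorm ℝ k m (φ.compSubConstCLM ℝ (c • z)) ≤
      2 ^ k * (Finset.Iic (k, m)).sup (schwartzSeminormFamily ℝ E F) φ * (1 + C * ‖z‖) ^ k := by
  refine (seminorm_compSubConstCLM_le φ k m (c • z)).trans ?_
  rw [norm_smul]
  gcongr
  exact hc

lemma continuous_compSubConstCLM_smul (φ : 𝓢(E, F)) (c : ℝ) :
    Continuous fun z : E => φ.compSubConstCLM ℝ (c • z) :=
  (continuous_compSubConstCLM φ).comp (continuous_const_smul c)

end Translation

section DilatedMean

lemma integrable_one_add_mul_norm_pow {E : Type*} [NormedAddCommGroup E] [MeasurableSpace E]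
    {μ : Measure E} (hμ : ∀ k : ℕ, Integrable (fun z => ‖z‖ ^ k) μ) (c : ℝ) (k : ℕ):
    Integrable (fun z => (1 + c * ‖z‖) ^ k) μ := by
  simp only [add_comm (1 : ℝ), add_pow, one_pow, mul_one, mul_pow]
  exact integrable_finsetSum _ fun i _ => ((hμ i).const_mul _).mul_const _

variable {E F : Type*} [NormedAddCommGroup E] [NormedSpace ℝ E]
  [MeasurableSpace E] [OpensMeasurableSpace E] [NormedAddCommGroup F] [NormedSpace ℝ F]
  {μ : Measure E}

lemma integrable_seminorm_compSubConstCLM_smul (hμ : ∀ k : ℕ, Integrable (fun z => ‖z‖ ^ k) μ)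
    (φ : 𝓢(E, F)) (c : ℝ) (k m : ℕ) :
    Integrable (fun z => SchwartzMap.seminorm ℝ k m (φ.compSubConstCLM ℝ (c • z))) μ :=
  ((integrable_one_add_mul_norm_pow hμ |c| k).const_mul _).mono'
    (((schwartz_withSeminorms ℝ E F).continuous_seminorm (k, m)).comp
      (continuous_compSubConstCLM_smul φ c)).aestronglyMeasurable
    (.of_forall fun z => by
      rw [Real.norm_of_nonneg (apply_nonneg _ _)]
      exact seminorm_compSubConstCLM_smul_le φ k m le_rfl z)

variable [SecondCountableTopology E]

/-- The convolution `x ↦ ∫ φ (x - c z) dμ(z)` of a Schwartz function with the dilation by `c` of a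
measure `μ` with finite moments. -/
def dilatedMean (μ : Measure E) (hμ : ∀ k : ℕ, Integrable (fun z => ‖z‖ ^ k) μ)
    (c : ℝ) (φ : 𝓢(E, F)) : 𝓢(E, F) :=
  schwartzIntegral μ (fun z => φ.compSubConstCLM ℝ (c • z)) (continuous_compSubConstCLM_smul φ c)
    (integrable_seminorm_compSubConstCLM_smul hμ φ c)

lemma dilatedMean_apply (hμ : ∀ k : ℕ, Integrable (fun z => ‖z‖ ^ k) μ)
    (c : ℝ) (φ : 𝓢(E, F)) (x : E) : dilatedMean μ hμ c φ x = ∫ z, φ (x - c • z) ∂μ := rfl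

lemma continuous_dilatedMean (hμ : ∀ k : ℕ, Integrable (fun z => ‖z‖ ^ k) μ)
    (φ : 𝓢(E, F)) : Continuous fun c => dilatedMean μ hμ c φ := by
  refine continuous_iff_continuousAt.2 fun c => tendsto_schwartzIntegral _ _ _ _
    (b := fun k m z => 2 ^ k * (Finset.Iic (k, m)).sup (schwartzSeminormFamily ℝ E F) φ *
      (1 + (|c| + 1) * ‖z‖) ^ k)
    (fun k m => (integrable_one_add_mul_norm_pow hμ (|c| + 1) k).const_mul _) (fun k m => ?_)
    fun z => ?_
  · filter_upwards [(continuous_abs.tendsto c).eventually (gt_mem_nhds (lt_add_one |c|))]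
      with c' hc' z
    exact seminorm_compSubConstCLM_smul_le φ k m hc'.le z
  · exact ((continuous_compSubConstCLM φ).comp (continuous_id.smul continuous_const)).tendsto c

end DilatedMean

section Gaussian

lemma one_add_pow_mul_exp_neg_mul_sq_le {c : ℝ} (hc : 0 < c) (m : ℕ) {r : ℝ} (hr : 0 ≤ r) :
    (1 + r) ^ m * Real.exp (-c * r ^ 2) ≤ Real.exp (3 * c) * (m.factorial / (2 * c) ^ m) := by
  have hpow : (1 + r) ^ m ≤ m.factorial / (2 * c) ^ m * Real.exp (2 * c * (1 + r)) := by
    have := Real.pow_div_factorial_le_exp (2 * c * (1 + r)) (by positivity) m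
    rw [mul_pow, div_le_iff₀ (by positivity)] at this
    rw [div_mul_eq_mul_div, le_div_iff₀ (by positivity)]
    linarith
  have hexp : Real.exp (2 * c * (1 + r)) * Real.exp (-c * r ^ 2) ≤ Real.exp (3 * c) := by
    rw [← Real.exp_add, Real.exp_le_exp]
    nlinarith [mul_nonneg hc.le (sq_nonneg (r - 1))]
  calc (1 + r) ^ m * Real.exp (-c * r ^ 2)
      ≤ m.factorial / (2 * c) ^ m * Real.exp (2 * c * (1 + r)) * Real.exp (-c * r ^ 2) := by gcongr
    _ ≤ m.factorial / (2 * c) ^ m * Real.exp (3 * c) := by rw [mul_assoc]; gcongr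
    _ = _ := mul_comm _ _

lemma norm_iteratedFDeriv_exp_comp_le {E : Type*} [NormedAddCommGroup E] [NormedSpace ℝ E]
    {f : E → ℝ} (hf : ContDiff ℝ ∞ f) {m : ℕ} {D : ℝ} {x : E} (hD : 1 ≤ D)
    (hb : ∀ i ≤ m, ‖iteratedFDeriv ℝ i f x‖ ≤ D) :
    ‖iteratedFDeriv ℝ m (fun y => Real.exp (f y)) x‖ ≤ m.factorial * Real.exp (f x) * D ^ m := by
  refine norm_iteratedFDeriv_comp_le (N := ∞) Real.contDiff_exp hf (mod_cast le_top) x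
    (fun i _ => ?_) fun i hi him => (hb i him).trans (le_self_pow₀ hD (by lia))
  rw [norm_iteratedFDeriv_eq_norm_iteratedDeriv, iteratedDeriv_eq_iterate, Real.iter_deriv_exp,
    Real.norm_of_nonneg (Real.exp_nonneg _)]

variable {E : Type*} [NormedAddCommGroup E] [InnerProductSpace ℝ E]

lemma exists_norm_pow_mul_iteratedFDeriv_gaussian_le {c : ℝ} (hc : 0 < c) (k m : ℕ) :
    ∃ C, ∀ x : E, ‖x‖ ^ k * ‖iteratedFDeriv ℝ m (fun y => Real.exp (-c * ‖y‖ ^ 2)) x‖ ≤ C := by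
  have hf : Function.HasTemperateGrowth fun x : E => -c * ‖x‖ ^ 2 :=
    (Function.HasTemperateGrowth.const (-c)).mul (Function.hasTemperateGrowth_norm_sq _)
  obtain ⟨j, C, hC, hb⟩ := hf.norm_iteratedFDeriv_le_uniform m
  refine ⟨m.factorial * (1 + C) ^ m *
    (Real.exp (3 * c) * ((k + j * m).factorial / (2 * c) ^ (k + j * m))), fun x => ?_⟩
  have hx : 1 ≤ (1 + ‖x‖) ^ j := one_le_pow₀ (by linarith [norm_nonneg x])
  have hderiv := norm_iteratedFDeriv_exp_comp_le (D := (1 + C) * (1 + ‖x‖) ^ j) hf.1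
    (by nlinarith) fun i hi => (hb i hi x).trans (by gcongr; linarith)
  calc _ ≤ (1 + ‖x‖) ^ k *
        (m.factorial * Real.exp (-c * ‖x‖ ^ 2) * ((1 + C) * (1 + ‖x‖) ^ j) ^ m) := by
        gcongr
        linarith
    _ = m.factorial * (1 + C) ^ m * ((1 + ‖x‖) ^ (k + j * m) * Real.exp (-c * ‖x‖ ^ 2)) := by
        rw [mul_pow, ← pow_mul, pow_add]; ring
    _ ≤ _ := mul_le_mul_of_nonneg_left (one_add_pow_mul_exp_neg_mul_sq_le hc _ (norm_nonneg x))
        (by positivity)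

/-- The Gaussian `x ↦ exp (-c ‖x‖²)`, `c > 0`, as a Schwartz function. -/
def gaussianSchwartz (E : Type*) [NormedAddCommGroup E] [InnerProductSpace ℝ E] {c : ℝ}
    (hc : 0 < c) : 𝓢(E, ℝ) where
  toFun x := Real.exp (-c * ‖x‖ ^ 2)
  smooth' := (contDiff_const.mul (contDiff_norm_sq ℝ)).exp
  decay' := exists_norm_pow_mul_iteratedFDeriv_gaussian_le hc

end Gaussian

section AbsDensity

variable {E : Type*} [NormedAddCommGroup E] [NormedSpace ℝ E] [MeasurableSpace E] [BorelSpace E]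
  {μ : Measure E}

/-- The measure with density `|g|` with respect to `μ`. -/
def absDensity (μ : Measure E) (g : 𝓢(E, ℝ)) : Measure E :=
  μ.withDensity fun x => ENNReal.ofReal |g x|

lemma integral_absDensity (g : 𝓢(E, ℝ)) (f : E → ℝ) :
    ∫ x, f x ∂absDensity μ g = ∫ x, |g x| * f x ∂μ := by
  rw [absDensity, integral_withDensity_eq_integral_toReal_smul
    g.continuous.abs.measurable.ennreal_ofReal (.of_forall fun _ => ENNReal.ofReal_lt_top)]
  simp only [ENNReal.toReal_ofReal (abs_nonneg _), smul_eq_mul]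

lemma integrable_norm_pow_absDensity [SecondCountableTopology E] [μ.HasTemperateGrowth]
    (g : 𝓢(E, ℝ)) (k : ℕ) :
    Integrable (fun x => ‖x‖ ^ k) (absDensity μ g) := by
  rw [absDensity, integrable_withDensity_iff g.continuous.abs.measurable.ennreal_ofReal
    (.of_forall fun _ => ENNReal.ofReal_lt_top)]
  simpa only [ENNReal.toReal_ofReal (abs_nonneg _), Real.norm_eq_abs] using
    g.integrable_pow_mul μ k

end AbsDensity

section HeatKernel

variable {n : ℕ} {r t : ℝ}

/-- The heat kernel `(4πr)^(-n/2) exp (-|z|²/(4r))` on `ℝⁿ` at time `r`. -/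
def heatKernel (n : ℕ) (r : ℝ) (z : ES n) : ℝ :=
  (4 * Real.pi * r) ^ (-(n : ℝ) / 2) * Real.exp (-‖z‖ ^ 2 / (4 * r))

lemma heatOp_eq_integral_heatKernel (t : ℝ) (h : ES n → ℝ) (x : ES n) :
    heatOp n t h x = ∫ y, heatKernel n t (x - y) * h y := rfl

lemma heatKernel_pos (hr : 0 < r) (z : ES n) : 0 < heatKernel n r z := by
  unfold heatKernel; positivity

lemma heatKernel_sub_comm (r : ℝ) (x y : ES n) :
    heatKernel n r (x - y) = heatKernel n r (y - x) := by
  rw [heatKernel, heatKernel, norm_sub_rev]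

/-- The heat kernel at a positive time as a Schwartz function. -/
def heatKernelSchwartz (n : ℕ) {r : ℝ} (hr : 0 < r) : 𝓢(ES n, ℝ) :=
  (4 * Real.pi * r) ^ (-(n : ℝ) / 2) •
    gaussianSchwartz (ES n) (inv_pos.2 (mul_pos four_pos hr))

lemma coe_heatKernelSchwartz (hr : 0 < r) : ⇑(heatKernelSchwartz n hr) = heatKernel n r := by
  ext z
  change _ * Real.exp (-(4 * r)⁻¹ * ‖z‖ ^ 2) = _
  rw [heatKernel, neg_mul, inv_mul_eq_div, neg_div _ (‖z‖ ^ 2)]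

lemma continuous_heatKernel (r : ℝ) : Continuous (heatKernel n r) := by
  unfold heatKernel; fun_prop

lemma integral_heatKernel (hr : 0 < r) : ∫ z, heatKernel n r z = 1 := by
  have hexp (z : ES n) : -‖z‖ ^ 2 / (4 * r) = -(4 * r)⁻¹ * ‖z‖ ^ 2 := by ring
  simp only [heatKernel, integral_const_mul, hexp]
  rw [GaussianFourier.integral_rexp_neg_mul_sq_norm (by positivity), finrank_euclideanSpace,
    Fintype.card_fin, div_inv_eq_mul, show π * (4 * r) = 4 * π * r by ring,
    ← Real.rpow_add (by positivity), neg_div, neg_add_cancel, Real.rpow_zero]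

lemma heatKernel_sqrt_smul (hr : 0 < r) (z : ES n) :
    √r ^ n * heatKernel n r (√r • z) = heatKernel n 1 z := by
  have hpow : √r ^ n * r ^ (-(n : ℝ) / 2) = 1 := by
    rw [Real.sqrt_eq_rpow, ← Real.rpow_mul_natCast hr.le, ← Real.rpow_add hr]
    ring_nf
    exact Real.rpow_zero r
  have hnorm : -‖√r • z‖ ^ 2 / (4 * r) = -‖z‖ ^ 2 / (4 * 1) := by
    rw [norm_smul, Real.norm_of_nonneg (Real.sqrt_nonneg r), mul_pow, Real.sq_sqrt hr.le]
    field_simp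
  rw [heatKernel, heatKernel, hnorm, Real.mul_rpow (by positivity) hr.le, mul_one (4 * π),
    mul_comm _ (r ^ _), mul_assoc, ← mul_assoc, hpow, one_mul]

lemma heatOp_eq_integral_heatKernel_one (ht : 0 < t) (h : ES n → ℝ) (x : ES n) :
    heatOp n t h x = ∫ z, heatKernel n 1 z * h (x - √t • z) := by
  have hscale := Measure.integral_comp_smul (volume : Measure (ES n))
    (fun y => heatKernel n t y * h (x - y)) √t
  rw [finrank_euclideanSpace, Fintype.card_fin, smul_eq_mul, abs_of_pos (by positivity)] at hscale
  calc heatOp n t h x = ∫ y, heatKernel n t y * h (x - y) := by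
        rw [heatOp_eq_integral_heatKernel, ← integral_sub_left_eq_self _ volume x]
        simp only [sub_sub_cancel]
    _ = √t ^ n * ∫ z, heatKernel n t (√t • z) * h (x - √t • z) := by
        rw [hscale, mul_inv_cancel_left₀ (by positivity)]
    _ = _ := by simp only [← integral_const_mul, ← mul_assoc, heatKernel_sqrt_smul ht]

/-- The heat semigroup `e^{tΔ}` on Schwartz functions, written as
`x ↦ ∫ φ (x - √t z) heatKernel n 1 z dz` so as to make sense at `t = 0` as well. -/
def heatSchwartz (t : ℝ) (φ : 𝓢(ES n, ℝ)) : 𝓢(ES n, ℝ) :=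
  dilatedMean (absDensity volume (heatKernelSchwartz n one_pos))
    (integrable_norm_pow_absDensity _) √t φ

lemma heatSchwartz_apply (t : ℝ) (φ : 𝓢(ES n, ℝ)) (x : ES n) :
    heatSchwartz t φ x = ∫ z, heatKernel n 1 z * φ (x - √t • z) := by
  rw [heatSchwartz, dilatedMean_apply, integral_absDensity, coe_heatKernelSchwartz]
  simp only [abs_of_pos (heatKernel_pos one_pos _)]

lemma heatSchwartz_apply_eq_heatOp (ht : 0 < t) (φ : 𝓢(ES n, ℝ)) (x : ES n) :
    heatSchwartz t φ x = heatOp n t φ x := by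
  rw [heatSchwartz_apply, heatOp_eq_integral_heatKernel_one ht]

lemma heatSchwartz_zero (φ : 𝓢(ES n, ℝ)) : heatSchwartz 0 φ = φ := by
  ext x
  simp only [heatSchwartz_apply, Real.sqrt_zero, zero_smul, sub_zero, integral_mul_const,
    integral_heatKernel one_pos, one_mul]

lemma continuous_heatSchwartz (φ : 𝓢(ES n, ℝ)) : Continuous fun t => heatSchwartz t φ :=
  (continuous_dilatedMean _ φ).comp Real.continuous_sqrt

lemma tendsto_heatSchwartz_zero (φ : 𝓢(ES n, ℝ)) :
    Tendsto (fun t => heatSchwartz t φ) (𝓝 0) (𝓝 φ) :=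
  (continuous_heatSchwartz φ).tendsto' _ _ (heatSchwartz_zero φ)

end HeatKernel

section Duality

variable {n : ℕ} {r : ℝ} {v : ES n → ℝ}

lemma integrable_heatKernel_mul (hint : ∀ φ : 𝓢(ES n, ℝ), Integrable fun x => v x * φ x)
    (hr : 0 < r) (x : ES n) : Integrable fun y => heatKernel n r (x - y) * v y := by
  have := hint ((heatKernelSchwartz n hr).compSubConstCLM ℝ x)
  simp only [SchwartzMap.compSubConstCLM_apply, coe_heatKernelSchwartz] at this
  simpa only [heatKernel_sub_comm r x, mul_comm] using this

lemma integrable_prod_heatKernel_mul (hv : Continuous v)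
    (hint : ∀ φ : 𝓢(ES n, ℝ), Integrable fun x => v x * φ x) (hr : 0 < r) (φ : 𝓢(ES n, ℝ)) :
    Integrable (fun p : ES n × ES n => heatKernel n r (p.1 - p.2) * v p.2 * φ p.1)
      (volume.prod volume) := by
  have hcont : Continuous fun p : ES n × ES n => heatKernel n r (p.1 - p.2) * v p.2 * φ p.1 := by
    have := continuous_heatKernel (n := n) r
    have := φ.continuous
    fun_prop
  let Φ : 𝓢(ES n, ℝ) := dilatedMean (absDensity volume φ) (integrable_norm_pow_absDensity φ) 1
    (heatKernelSchwartz n hr)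
  have hΦ (y : ES n) : Φ y = ∫ x, ‖φ x‖ * heatKernel n r (x - y) := by
    simp only [Φ, dilatedMean_apply, integral_absDensity, coe_heatKernelSchwartz, one_smul,
      Real.norm_eq_abs, heatKernel_sub_comm r y]
  refine (integrable_prod_iff' hcont.aestronglyMeasurable).2 ⟨.of_forall fun y => ?_, ?_⟩
  · have := integrable_heatKernel_mul (fun ψ => integrable_mul_schwartz φ.integrable ψ) hr y
    simpa only [heatKernel_sub_comm r y, mul_right_comm _ (v y)] using this.mul_const (v y)
  · refine (hint Φ).norm.congr (.of_forall fun y => ?_)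
    have hnonneg : 0 ≤ Φ y := by
      rw [hΦ]
      exact integral_nonneg fun x => mul_nonneg (norm_nonneg _) (heatKernel_pos hr _).le
    simp only [norm_mul, Real.norm_of_nonneg (heatKernel_pos hr _).le, Real.norm_of_nonneg hnonneg]
    rw [hΦ, ← integral_const_mul]
    exact integral_congr_ae (.of_forall fun x => by ring)

lemma integrable_heatOp_mul_schwartz (hv : Continuous v)
    (hint : ∀ φ : 𝓢(ES n, ℝ), Integrable fun x => v x * φ x) (hr : 0 < r) (φ : 𝓢(ES n, ℝ)) :
    Integrable fun x => heatOp n r v x * φ x := by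
  simpa only [heatOp_eq_integral_heatKernel, integral_mul_const] using
    (integrable_prod_heatKernel_mul hv hint hr φ).integral_prod_left

lemma integral_heatOp_mul_schwartz (hv : Continuous v)
    (hint : ∀ φ : 𝓢(ES n, ℝ), Integrable fun x => v x * φ x) (hr : 0 < r) (φ : 𝓢(ES n, ℝ)) :
    ∫ x, heatOp n r v x * φ x = ∫ y, v y * heatSchwartz r φ y := by
  simp only [heatSchwartz_apply_eq_heatOp hr, heatOp_eq_integral_heatKernel,
    ← integral_const_mul, ← integral_mul_const]
  rw [integral_integral_swap (integrable_prod_heatKernel_mul hv hint hr φ)]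
  refine integral_congr_ae (.of_forall fun y => integral_congr_ae (.of_forall fun x => ?_))
  simp only [heatKernel_sub_comm r x]
  ring

variable {I : Set ℝ}

lemma dense_image2_heatSchwartz (hI : 0 ∈ closure I) :
    Dense (image2 (heatSchwartz (n := n)) I univ) := fun φ => by
  have := mem_closure_iff_nhdsWithin_neBot.1 hI
  refine mem_closure_of_tendsto ((tendsto_heatSchwartz_zero φ).mono_left nhdsWithin_le_nhds)
    (b := 𝓝[I] 0) ?_
  filter_upwards [self_mem_nhdsWithin] with t ht using mem_image2_of_mem ht (mem_univ φ)

lemma clm_eq_of_apply_heatSchwartz_eq {L₁ L₂ : 𝓢(ES n, ℝ) →L[ℝ] ℝ} (hI : 0 ∈ closure I)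
    (h : ∀ t ∈ I, ∀ φ, L₁ (heatSchwartz t φ) = L₂ (heatSchwartz t φ)) : L₁ = L₂ :=
  DFunLike.coe_injective <| L₁.continuous.ext_on (dense_image2_heatSchwartz hI) L₂.continuous
    fun _ ⟨t, ht, φ, _, hψ⟩ => hψ ▸ h t ht φ

lemma exists_clm_apply_heatSchwartz_eq {L : ℕ → 𝓢(ES n, ℝ) →L[ℝ] ℝ}
    (hbdd : ∀ φ, ∃ A, ∀ k, |L k φ| ≤ A) {τ : ℕ → ℝ} (hτ : Tendsto τ atTop (𝓝 0))
    (hI : 0 ∈ closure I) {S : ℝ → 𝓢(ES n, ℝ) → ℝ}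
    (hS : ∀ t ∈ I, ∀ φ, ∀ᶠ k in atTop, S t φ = L k (heatSchwartz (t - τ k) φ)) :
    ∃ u₀ : 𝓢(ES n, ℝ) →L[ℝ] ℝ, ∀ t ∈ I, ∀ φ, S t φ = u₀ (heatSchwartz t φ) := by
  have hlim : ∀ t ∈ I, ∀ φ, Tendsto (fun k => L k (heatSchwartz t φ)) atTop (𝓝 (S t φ)) := by
    intro t ht φ
    have hheat : Tendsto (fun k => heatSchwartz (t - τ k) φ) atTop (𝓝 (heatSchwartz t φ)) :=
      ((continuous_heatSchwartz φ).tendsto t).comp (by simpa using hτ.const_sub t)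
    have hdiff := (tendsto_apply_sub_apply_of_forall_abs_le hbdd hheat).const_sub (S t φ)
    rw [sub_zero] at hdiff
    refine hdiff.congr' ?_
    filter_upwards [hS t ht φ] with k hk
    rw [hk, sub_sub_cancel]
  obtain ⟨u₀, hu₀⟩ := exists_clm_tendsto_of_dense (dense_image2_heatSchwartz hI) hbdd
    fun _ ⟨t, ht, φ, _, hψ⟩ => ⟨S t φ, hψ ▸ hlim t ht φ⟩
  exact ⟨u₀, fun t ht φ => tendsto_nhds_unique (hlim t ht φ) (hu₀ _)⟩

end Duality

section Laplacian

variable {n : ℕ} {f g χ w : ES n → ℝ} {y : ES n} {a : ℝ}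

lemma contDiff_one_fderiv_apply {E : Type*} [NormedAddCommGroup E] [NormedSpace ℝ E] {f : E → ℝ}
    (hf : ContDiff ℝ 2 f) (v : E) : ContDiff ℝ 1 fun y => fderiv ℝ f y v :=
  (hf.fderiv_right (m := 1) (by norm_num)).clm_apply contDiff_const

lemma continuous_fderiv_fderiv_apply {E : Type*} [NormedAddCommGroup E] [NormedSpace ℝ E]
    {f : E → ℝ} (hf : ContDiff ℝ 2 f) (v : E) :
    Continuous fun y => fderiv ℝ (fun y => fderiv ℝ f y v) y v :=
  ((contDiff_one_fderiv_apply hf v).continuous_fderiv one_ne_zero).clm_apply continuous_const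

lemma continuous_heatLap (hf : ContDiff ℝ 2 f) : Continuous (heatLap n f) :=
  continuous_finsetSum _ fun _ _ => continuous_fderiv_fderiv_apply hf _

lemma fderiv_apply_gradient (f g : ES n → ℝ) (y : ES n) :
    fderiv ℝ f y (∇ g y) = ∑ i, fderiv ℝ f y (EuclideanSpace.single i 1) *
      fderiv ℝ g y (EuclideanSpace.single i 1) := by
  rw [← inner_gradient_left, ← (EuclideanSpace.basisFun (Fin n) ℝ).sum_inner_mul_inner]
  simp only [EuclideanSpace.basisFun_apply, inner_gradient_left, inner_gradient_right, conj_trivial]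

/-- The commutator `[Δ, χ] w = Δ (χ w) - χ Δ w` of the Laplacian with multiplication by `χ`,
written out as `2 ∇w·∇χ + w Δχ`. -/
def lapCommutator (χ w : ES n → ℝ) (y : ES n) : ℝ :=
  2 * fderiv ℝ w y (∇ χ y) + w y * heatLap n χ y

lemma heatLap_mul (hw : ContDiff ℝ 2 w) (hχ : ContDiff ℝ 2 χ) (y : ES n) :
    heatLap n (fun y => w y * χ y) y = heatLap n w y * χ y + lapCommutator χ w y := by
  have hw' := hw.differentiable two_ne_zero
  have hχ' := hχ.differentiable two_ne_zero
  have hfst (v z : ES n) : fderiv ℝ (fun y => w y * χ y) z v =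
      w z * fderiv ℝ χ z v + fderiv ℝ w z v * χ z := by
    rw [fderiv_fun_mul (hw' z) (hχ' z), add_apply, smul_apply, smul_apply, smul_eq_mul,
      smul_eq_mul, mul_comm (χ z)]
  have hsnd (v : ES n) : fderiv ℝ (fun z => fderiv ℝ (fun y => w y * χ y) z v) y v =
      fderiv ℝ (fun z => fderiv ℝ w z v) y v * χ y + (2 * (fderiv ℝ w y v * fderiv ℝ χ y v) +
        w y * fderiv ℝ (fun z => fderiv ℝ χ z v) y v) := by
    have hw₁ := (contDiff_one_fderiv_apply hw v).differentiable one_ne_zero y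
    have hχ₁ := (contDiff_one_fderiv_apply hχ v).differentiable one_ne_zero y
    simp only [hfst]
    rw [fderiv_fun_add ((hw' y).fun_mul hχ₁) (hw₁.fun_mul (hχ' y)), fderiv_fun_mul (hw' y) hχ₁,
      fderiv_fun_mul hw₁ (hχ' y)]
    simp only [add_apply, smul_apply, smul_eq_mul]
    ring
  simp only [lapCommutator, fderiv_apply_gradient, heatLap, hsnd, Finset.sum_add_distrib,
    Finset.sum_mul, Finset.mul_sum]

lemma heatLap_eq_zero_of_eventuallyEq_const (h : f =ᶠ[𝓝 y] fun _ => a) : heatLap n f y = 0 := by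
  refine Finset.sum_eq_zero fun i _ => ?_
  have hfst : (fun z => fderiv ℝ f z (EuclideanSpace.single i 1)) =ᶠ[𝓝 y] fun _ => 0 := by
    filter_upwards [h.eventuallyEq_nhds] with z hz
    rw [hz.fderiv_eq, fderiv_fun_const, Pi.zero_apply, zero_apply]
  rw [hfst.fderiv_eq, fderiv_fun_const, Pi.zero_apply, zero_apply]

lemma lapCommutator_eq_zero_of_eventuallyEq_const (h : χ =ᶠ[𝓝 y] fun _ => a) (w : ES n → ℝ) :
    lapCommutator χ w y = 0 := by
  rw [lapCommutator, heatLap_eq_zero_of_eventuallyEq_const h, h.gradient_eq, gradient_fun_const',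
    map_zero, mul_zero, mul_zero, add_zero]

lemma hasCompactSupport_heatLap (hf : HasCompactSupport f) : HasCompactSupport (heatLap n f) :=
  .intro hf fun _ hy =>
    heatLap_eq_zero_of_eventuallyEq_const (notMem_tsupport_iff_eventuallyEq.1 hy)

lemma integral_fderiv_apply_mul {E : Type*} [NormedAddCommGroup E] [NormedSpace ℝ E]
    [FiniteDimensional ℝ E] [MeasurableSpace E] [BorelSpace E] {μ : Measure E} [μ.IsAddHaarMeasure]
    {f w : E → ℝ} (hf : ContDiff ℝ 1 f) (hw : ContDiff ℝ 1 w)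
    (hc : HasCompactSupport w) (v : E) :
    ∫ y, fderiv ℝ f y v * w y ∂μ = -∫ y, f y * fderiv ℝ w y v ∂μ := by
  have hf' : Continuous fun y => fderiv ℝ f y v :=
    (hf.continuous_fderiv one_ne_zero).clm_apply continuous_const
  have hw' : Continuous fun y => fderiv ℝ w y v :=
    (hw.continuous_fderiv one_ne_zero).clm_apply continuous_const
  rw [integral_mul_fderiv_eq_neg_fderiv_mul_of_integrable
    ((hf'.mul hw.continuous).integrable_of_hasCompactSupport hc.mul_left)
    ((hf.continuous.mul hw').integrable_of_hasCompactSupport (hc.fderiv_apply ℝ v).mul_left)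
    ((hf.continuous.mul hw.continuous).integrable_of_hasCompactSupport hc.mul_left)
    (fun y _ => hf.differentiable one_ne_zero y) (fun y _ => hw.differentiable one_ne_zero y),
    neg_neg]

lemma integral_heatLap_mul (hf : ContDiff ℝ 2 f) (hw : ContDiff ℝ 2 w)
    (hc : HasCompactSupport w) : ∫ y, heatLap n f y * w y = ∫ y, f y * heatLap n w y := by
  simp only [heatLap, Finset.sum_mul, Finset.mul_sum]
  rw [integral_finsetSum, integral_finsetSum]
  · refine Finset.sum_congr rfl fun i _ => ?_
    rw [integral_fderiv_apply_mul (contDiff_one_fderiv_apply hf _) (hw.of_le one_le_two) hc,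
      integral_fderiv_apply_mul (hf.of_le one_le_two) (contDiff_one_fderiv_apply hw _)
        (hc.fderiv_apply ℝ _), neg_neg]
  · exact fun i _ => (hf.continuous.mul
      (continuous_fderiv_fderiv_apply hw _)).integrable_of_hasCompactSupport
      ((hc.fderiv_apply ℝ _).fderiv_apply ℝ _).mul_left
  · exact fun i _ => ((continuous_fderiv_fderiv_apply hf _).mul
      hw.continuous).integrable_of_hasCompactSupport hc.mul_left

lemma heatLap_comp_smul (f : ES n → ℝ) (c : ℝ) (y : ES n) :
    heatLap n (fun y => f (c • y)) y = c ^ 2 * heatLap n f (c • y) := by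
  simp only [heatLap, Finset.mul_sum]
  refine Finset.sum_congr rfl fun i _ => ?_
  set f' : ES n → ℝ := fun z => fderiv ℝ f z (EuclideanSpace.single i 1)
  have hfst : (fun z => fderiv ℝ (fun y => f (c • y)) z (EuclideanSpace.single i 1)) =
      c • fun z => f' (c • z) := by
    ext z
    rw [fderiv_comp_smul, smul_apply, Pi.smul_apply]
  rw [hfst, fderiv_const_smul_field, Pi.smul_apply, smul_apply, fderiv_comp_smul, smul_apply,
    smul_smul, smul_eq_mul, sq]

end Laplacian

section HeatSolution

lemma hasDerivAt_integral_of_compact_support {Y G : Type*} [TopologicalSpace Y] [R1Space Y]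
    [MeasurableSpace Y] [OpensMeasurableSpace Y] {μ : Measure Y} [IsFiniteMeasureOnCompacts μ]
    [NormedAddCommGroup G] [NormedSpace ℝ G] {F F' : ℝ → Y → G} {I : Set ℝ} {K : Set Y} {t : ℝ}
    (hI : IsOpen I) (ht : t ∈ I) (hK : IsCompact K) (hF : ∀ τ ∈ I, Continuous (F τ))
    (hF' : ContinuousOn (Function.uncurry F') (I ×ˢ univ))
    (hFK : ∀ τ ∈ I, ∀ y ∉ K, F τ y = 0)
    (hd : ∀ τ ∈ I, ∀ y, HasDerivAt (fun τ => F τ y) (F' τ y) τ) :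
    HasDerivAt (fun τ => ∫ y, F τ y ∂μ) (∫ y, F' t y ∂μ) t := by
  have hF'K : ∀ τ ∈ I, ∀ y ∉ K, F' τ y = 0 := fun τ hτ y hy =>
    (hd τ hτ y).unique ((hasDerivAt_const τ (0 : G)).congr_of_eventuallyEq
      (mem_of_superset (hI.mem_nhds hτ) fun σ hσ => hFK σ hσ y hy))
  obtain ⟨ε, hε, hεI⟩ := nhds_basis_closedBall.mem_iff.1 (hI.mem_nhds ht)
  obtain ⟨B, hB⟩ := ((isCompact_closedBall t ε).prod hK).exists_bound_of_continuousOn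
    (hF'.mono (prod_mono hεI (subset_univ K)))
  have hint : ∀ τ ∈ I, Integrable (F τ) μ := fun τ hτ =>
    (hF τ hτ).integrable_of_hasCompactSupport (.intro hK (hFK τ hτ))
  have hF't : Continuous (F' t) := continuousOn_univ.1 (hF'.comp
    (Continuous.prodMk_right t).continuousOn fun _ _ => ⟨ht, mem_univ _⟩)
  refine (hasDerivAt_integral_of_dominated_loc_of_deriv_le (F' := F')
    (bound := (toMeasurable μ K).indicator fun _ => |B|) (closedBall_mem_nhds t hε)
    (mem_of_superset (hI.mem_nhds ht) fun τ hτ => (hint τ hτ).aestronglyMeasurable) (hint t ht)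
    (hF't.integrable_of_hasCompactSupport (.intro hK (hF'K t ht))).aestronglyMeasurable
    (.of_forall fun y τ hτ => ?_) ?_ (.of_forall fun y τ hτ => hd τ (hεI hτ) y)).2
  · by_cases hy : y ∈ K
    · rw [indicator_of_mem (subset_toMeasurable μ K hy)]
      exact (hB (τ, y) ⟨hτ, hy⟩).trans (le_abs_self B)
    · rw [hF'K τ (hεI hτ) y hy, norm_zero]
      exact indicator_nonneg (fun _ _ => abs_nonneg B) y
  · exact (integrable_indicator_iff (measurableSet_toMeasurable μ K)).2
      (integrableOn_const (by rw [measure_toMeasurable]; exact hK.measure_lt_top.ne))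

variable {n : ℕ} {c : ℝ} {I J : Set ℝ} {f w χ : ES n → ℝ} {u v : ℝ → ES n → ℝ} {s t : ℝ}

lemma integral_heatLap_mul_sub (hf : ContDiff ℝ 2 f) (hw : ContDiff ℝ 2 w)
    (hχ : ContDiff ℝ 2 χ) (hc : HasCompactSupport χ) :
    ∫ y, (heatLap n f y * (w y * χ y) - f y * (heatLap n w y * χ y)) =
      ∫ y, f y * lapCommutator χ w y := by
  have hwχ : HasCompactSupport fun y => w y * χ y := hc.mul_left
  have hfw : Integrable fun y => f y * (heatLap n w y * χ y) :=
    (hf.continuous.mul ((continuous_heatLap hw).mul hχ.continuous)).integrable_of_hasCompactSupport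
      hc.mul_left.mul_left
  have hfL : Integrable fun y => heatLap n f y * (w y * χ y) :=
    ((continuous_heatLap hf).mul
      (hw.continuous.mul hχ.continuous)).integrable_of_hasCompactSupport hwχ.mul_left
  have hfwL : Integrable fun y => f y * heatLap n (fun y => w y * χ y) y :=
    (hf.continuous.mul (continuous_heatLap (hw.mul hχ))).integrable_of_hasCompactSupport
      (hasCompactSupport_heatLap hwχ).mul_left
  rw [integral_sub hfL hfw, integral_heatLap_mul hf (hw.mul hχ) hwχ, ← integral_sub hfwL hfw]
  refine integral_congr_ae (.of_forall fun y => ?_)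
  simp only [heatLap_mul hw hχ]
  ring

/-- `u` is a classical (`C²`) solution of `∂ₜu = c Δu` on `I × ℝⁿ`, where `I` is an open set of
times. The heat equation is `c = 1`, the backward heat equation `c = -1`. -/
structure IsHeatSolutionOn (c : ℝ) (I : Set ℝ) (u : ℝ → ES n → ℝ) : Prop where
  isOpen : IsOpen I
  contDiffOn : ContDiffOn ℝ 2 (Function.uncurry u) (I ×ˢ univ)
  hasDerivAt : ∀ t ∈ I, ∀ x, HasDerivAt (fun τ => u τ x) (c * heatLap n (u t) x) t

namespace IsHeatSolutionOn

lemma mono (hu : IsHeatSolutionOn c I u) (hJ : IsOpen J) (hJI : J ⊆ I) :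
    IsHeatSolutionOn c J u :=
  ⟨hJ, hu.contDiffOn.mono (prod_mono_left hJI), fun t ht => hu.hasDerivAt t (hJI ht)⟩

lemma contDiff (hu : IsHeatSolutionOn c I u) (ht : t ∈ I) : ContDiff ℝ 2 (u t) :=
  contDiffOn_univ.1 (hu.contDiffOn.comp (contDiff_prodMk_right t).contDiffOn
    fun _ _ => ⟨ht, mem_univ _⟩)

lemma hasFDerivAt_uncurry (hu : IsHeatSolutionOn c I u) (ht : t ∈ I) (x : ES n) :
    HasFDerivAt (Function.uncurry u) (fderiv ℝ (Function.uncurry u) (t, x)) (t, x) :=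
  ((hu.contDiffOn.differentiableOn two_ne_zero).differentiableAt
    ((hu.isOpen.prod isOpen_univ).mem_nhds ⟨ht, mem_univ x⟩)).hasFDerivAt

lemma continuousOn_fderiv_uncurry (hu : IsHeatSolutionOn c I u) :
    ContinuousOn (fderiv ℝ (Function.uncurry u)) (I ×ˢ univ) :=
  hu.contDiffOn.continuousOn_fderiv_of_isOpen (hu.isOpen.prod isOpen_univ) one_le_two

lemma continuousOn_heatLap (hu : IsHeatSolutionOn c I u) :
    ContinuousOn (fun p : ℝ × ES n => c * heatLap n (u p.1) p.2) (I ×ˢ univ) := by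
  refine (hu.continuousOn_fderiv_uncurry.clm_apply
    (continuousOn_const (c := ((1 : ℝ), (0 : ES n))))).congr fun ⟨t, x⟩ ⟨ht, _⟩ => ?_
  have hpath : HasDerivAt (fun τ : ℝ => (τ, x)) ((1 : ℝ), (0 : ES n)) t :=
    (hasDerivAt_id t).prodMk (hasDerivAt_const t x)
  exact (hu.hasDerivAt t ht x).unique
    ((hu.hasFDerivAt_uncurry ht x).comp_hasDerivAt (f := fun τ => (τ, x)) t hpath)

lemma continuousOn_lapCommutator (hu : IsHeatSolutionOn c I u) (hχ : ContDiff ℝ 2 χ) :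
    ContinuousOn (fun p : ℝ × ES n => lapCommutator χ (u p.1) p.2) (I ×ˢ univ) := by
  have hgrad : Continuous (∇ χ) :=
    (InnerProductSpace.toDual ℝ (ES n)).symm.continuous.comp (hχ.continuous_fderiv two_ne_zero)
  have hfderiv : ContinuousOn (fun p : ℝ × ES n => fderiv ℝ (u p.1) p.2 (∇ χ p.2))
      (I ×ˢ univ) := by
    refine (hu.continuousOn_fderiv_uncurry.clm_apply
      (continuous_const (y := (0 : ℝ)).prodMk
        (hgrad.comp continuous_snd)).continuousOn).congr fun ⟨t, x⟩ ⟨ht, _⟩ => ?_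
    have hslice : HasFDerivAt (u t) ((fderiv ℝ (Function.uncurry u) (t, x)).comp
        (.inr ℝ ℝ (ES n))) x :=
      (hu.hasFDerivAt_uncurry ht x).comp x (hasFDerivAt_prodMk_right t x)
    simp only [hslice.fderiv]
    rfl
  exact (hfderiv.const_mul 2).add (hu.contDiffOn.continuousOn.mul
    ((continuous_heatLap hχ).comp continuous_snd).continuousOn)

lemma hasDerivAt_integral_mul_mul (hu : IsHeatSolutionOn c I u) (hv : IsHeatSolutionOn (-c) I v)
    (hχ : ContDiff ℝ 2 χ) (hχc : HasCompactSupport χ) (ht : t ∈ I) :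
    HasDerivAt (fun τ => ∫ y, u τ y * (v τ y * χ y))
      (c * ∫ y, u t y * lapCommutator χ (v t) y) t := by
  have hχ₂ : Continuous fun p : ℝ × ES n => χ p.2 := hχ.continuous.comp continuous_snd
  have hderiv := hasDerivAt_integral_of_compact_support (μ := (volume : Measure (ES n)))
    (F := fun τ y => u τ y * (v τ y * χ y))
    (F' := fun τ y => c * heatLap n (u τ) y * (v τ y * χ y) +
      u τ y * (-c * heatLap n (v τ) y * χ y))
    hu.isOpen ht hχc
    (fun τ hτ => (hu.contDiff hτ).continuous.mul ((hv.contDiff hτ).continuous.mul hχ.continuous))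
    ((hu.continuousOn_heatLap.mul (hv.contDiffOn.continuousOn.mul hχ₂.continuousOn)).add
      (hu.contDiffOn.continuousOn.mul (hv.continuousOn_heatLap.mul hχ₂.continuousOn)))
    (fun τ _ y hy => by simp only [image_eq_zero_of_notMem_tsupport hy, mul_zero])
    (fun τ hτ y => (hu.hasDerivAt τ hτ y).mul ((hv.hasDerivAt τ hτ y).mul_const (χ y)))
  convert! hderiv using 1
  rw [← integral_heatLap_mul_sub (hu.contDiff ht) (hv.contDiff ht) hχ hχc, ← integral_const_mul]
  exact integral_congr_ae (.of_forall fun y => by ring)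

lemma continuousOn_integral_mul_lapCommutator (hu : IsHeatSolutionOn c I u)
    (hv : IsHeatSolutionOn (-c) I v) (hχ : ContDiff ℝ 2 χ) (hχc : HasCompactSupport χ) :
    ContinuousOn (fun τ => ∫ y, u τ y * lapCommutator χ (v τ) y) I :=
  continuousOn_integral_of_compact_support hχc
    (hu.contDiffOn.continuousOn.mul (hv.continuousOn_lapCommutator hχ)) fun τ y _ hy => by
      simp only [lapCommutator_eq_zero_of_eventuallyEq_const
        (notMem_tsupport_iff_eventuallyEq.1 hy), mul_zero]

lemma integral_mul_mul_sub_integral_mul_mul (hu : IsHeatSolutionOn c I u)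
    (hv : IsHeatSolutionOn (-c) I v) (hχ : ContDiff ℝ 2 χ) (hχc : HasCompactSupport χ)
    (hI : uIcc s t ⊆ I) :
    (∫ y, u t y * (v t y * χ y)) - ∫ y, u s y * (v s y * χ y) =
      ∫ τ in s..t, c * ∫ y, u τ y * lapCommutator χ (v τ) y :=
  (intervalIntegral.integral_eq_sub_of_hasDerivAt
    (fun _ hτ => hu.hasDerivAt_integral_mul_mul hv hχ hχc (hI hτ))
    (((hu.continuousOn_integral_mul_lapCommutator hv hχ hχc).mono
      hI).const_mul c).intervalIntegrable).symm

end IsHeatSolutionOn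

end HeatSolution

section HeatKernelSolution

variable {n : ℕ} {r t τ : ℝ}

lemma hasFDerivAt_heatKernel_sub (r : ℝ) (x y : ES n) :
    HasFDerivAt (fun y => heatKernel n r (x - y))
      ((heatKernel n r (x - y) / (2 * r)) • innerSL ℝ (x - y)) y := by
  have hnorm := ((hasFDerivAt_id y).const_sub x).norm_sq
  refine (((hnorm.fun_neg.fun_const_smul (4 * r)⁻¹).exp.const_mul
    ((4 * π * r) ^ (-(n : ℝ) / 2))).congr_fderiv ?_).congr_of_eventuallyEq (.of_forall fun z => ?_)
  · ext v
    simp only [heatKernel, id_eq, ContinuousLinearMap.comp_neg, ContinuousLinearMap.comp_id,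
      neg_apply, smul_apply, coe_innerSL_apply, smul_eq_mul, nsmul_eq_mul, Nat.cast_ofNat]
    field_simp
    ring_nf
  · simp only [heatKernel, smul_eq_mul, id, div_eq_inv_mul]

lemma fderiv_fderiv_heatKernel_sub (r : ℝ) (x y v : ES n) :
    fderiv ℝ (fun y => fderiv ℝ (fun y => heatKernel n r (x - y)) y v) y v =
      heatKernel n r (x - y) * (inner ℝ (x - y) v ^ 2 / (4 * r ^ 2) - ‖v‖ ^ 2 / (2 * r)) := by
  have hinner : HasFDerivAt (fun y : ES n => inner ℝ (x - y) v) (-innerSL ℝ v) y := by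
    simpa only [real_inner_comm, inner_sub_right] using!
      ((innerSL ℝ v).hasFDerivAt (x := y)).const_sub (inner ℝ v x)
  have hfst (z : ES n) : fderiv ℝ (fun y => heatKernel n r (x - y)) z v =
      heatKernel n r (x - z) * (2 * r)⁻¹ * inner ℝ (x - z) v := by
    rw [(hasFDerivAt_heatKernel_sub r x z).fderiv, smul_apply, innerSL_apply_apply, smul_eq_mul,
      div_eq_mul_inv]
  simp only [hfst]
  rw [(((hasFDerivAt_heatKernel_sub r x y).mul_const _).fun_mul hinner).fderiv]
  simp only [add_apply, smul_apply, neg_apply, innerSL_apply_apply, smul_eq_mul,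
    real_inner_self_eq_norm_sq]
  ring

lemma heatLap_heatKernel_sub (r : ℝ) (x y : ES n) :
    heatLap n (fun y => heatKernel n r (x - y)) y =
      heatKernel n r (x - y) * (‖x - y‖ ^ 2 / (4 * r ^ 2) - n / (2 * r)) := by
  simp only [heatLap, fderiv_fderiv_heatKernel_sub, ← Finset.mul_sum, Finset.sum_sub_distrib,
    ← Finset.sum_div, EuclideanSpace.inner_single_right, PiLp.norm_single]
  simp [EuclideanSpace.real_norm_sq_eq]

lemma hasDerivAt_heatKernel (hr : 0 < r) (z : ES n) :
    HasDerivAt (fun r => heatKernel n r z)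
      (heatKernel n r z * (‖z‖ ^ 2 / (4 * r ^ 2) - n / (2 * r))) r := by
  have hpow := ((hasDerivAt_id r).const_mul (4 * π)).rpow_const (p := -(n : ℝ) / 2)
    (.inl (by simp only [id]; positivity))
  have hexp := (((hasDerivAt_id r).const_mul 4).fun_inv
    (by simp only [id]; positivity)).const_mul (-‖z‖ ^ 2) |>.exp
  refine (hpow.mul hexp).congr_deriv ?_
  simp only [id]
  rw [Real.rpow_sub_one (by positivity)]
  simp only [heatKernel, div_eq_mul_inv]
  field_simp
  ring

lemma contDiffOn_heatKernel_sub (t : ℝ) (x : ES n) :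
    ContDiffOn ℝ 2 (fun p : ℝ × ES n => heatKernel n (t - p.1) (x - p.2)) (Iio t ×ˢ univ) := by
  have hr : ContDiffOn ℝ 2 (fun p : ℝ × ES n => t - p.1) (Iio t ×ˢ univ) :=
    (contDiff_const.sub contDiff_fst).contDiffOn
  have hz : ContDiffOn ℝ 2 (fun p : ℝ × ES n => -‖x - p.2‖ ^ 2) (Iio t ×ˢ univ) :=
    ((contDiff_const.sub contDiff_snd).norm_sq ℝ).neg.contDiffOn
  have hpos : ∀ p ∈ Iio t ×ˢ (univ : Set (ES n)), 0 < t - p.1 := fun p hp => sub_pos.2 hp.1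
  exact ((contDiffOn_const.mul hr).rpow_const_of_ne fun p hp =>
      (mul_pos (by positivity) (hpos p hp)).ne').mul
    ((hz.div (contDiffOn_const.mul hr) fun p hp => (mul_pos four_pos (hpos p hp)).ne').exp)

lemma isHeatSolutionOn_heatKernel_sub (t : ℝ) (x : ES n) :
    IsHeatSolutionOn (-1) (Iio t) fun τ y => heatKernel n (t - τ) (x - y) where
  isOpen := isOpen_Iio
  contDiffOn := contDiffOn_heatKernel_sub t x
  hasDerivAt τ hτ y := by
    simpa only [heatLap_heatKernel_sub, mul_comm, mul_neg, neg_mul] using!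
      (hasDerivAt_heatKernel (sub_pos.2 hτ) (x - y)).comp τ ((hasDerivAt_id τ).const_sub t)

end HeatKernelSolution

section CutoffError

variable {n : ℕ} {r r₀ : ℝ} {χ : ES n → ℝ} {x y : ES n}

lemma heatKernel_le_inv_sqrt_pow_mul_exp (hr : 0 < r) (z : ES n) :
    heatKernel n r z ≤ (√r)⁻¹ ^ n * Real.exp (-‖z‖ ^ 2 / (4 * r)) := by
  have hpre : (4 * π * r) ^ (-(n : ℝ) / 2) ≤ (√r)⁻¹ ^ n := by
    rw [neg_div, Real.rpow_neg (by positivity), inv_pow, Real.sqrt_eq_rpow,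
      ← Real.rpow_mul_natCast hr.le, one_div_mul_eq_div]
    gcongr
    nlinarith [Real.pi_gt_three]
  exact mul_le_mul_of_nonneg_right hpre (Real.exp_nonneg _)

lemma exists_heatKernel_mul_one_add_norm_div_le (n : ℕ) (r₀ : ℝ) {θ : ℝ} (hθ : 0 < θ)
    (hθ₁ : θ < 1) :
    ∃ C : ℝ, 0 ≤ C ∧ ∀ r, 0 < r → r ≤ r₀ → ∀ z : ES n, 1 ≤ ‖z‖ →
      heatKernel n r z * (1 + ‖z‖ / r) ≤ C * Real.exp (-θ * ‖z‖ ^ 2 / (4 * r₀)) := by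
  set c := (1 - θ) / 4 with hc
  have hc₀ : 0 < c := by rw [hc]; linarith
  refine ⟨Real.exp (3 * c) * ((n + 2).factorial / (2 * c) ^ (n + 2)), by positivity,
    fun r hr hrr₀ z hz => ?_⟩
  set ρ := ‖z‖ / √r with hρ
  have hρ₀ : 0 ≤ ρ := by positivity
  have hρsq : ρ ^ 2 = ‖z‖ ^ 2 / r := by rw [hρ, div_pow, Real.sq_sqrt hr.le]
  have hinv : (√r)⁻¹ ≤ 1 + ρ := by
    rw [inv_eq_one_div]
    linarith [div_le_div_of_nonneg_right hz (Real.sqrt_nonneg r)]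
  have hdiv : 1 + ‖z‖ / r ≤ (1 + ρ) ^ 2 := by
    have : ‖z‖ / r ≤ ρ ^ 2 := by rw [hρsq]; gcongr; nlinarith
    nlinarith
  have hexp : Real.exp (-‖z‖ ^ 2 / (4 * r)) = Real.exp (-c * ρ ^ 2) *
      Real.exp (-θ * ‖z‖ ^ 2 / (4 * r)) := by
    rw [← Real.exp_add, hρsq, hc]
    congr 1
    field_simp
    ring
  calc heatKernel n r z * (1 + ‖z‖ / r)
      ≤ (√r)⁻¹ ^ n * Real.exp (-‖z‖ ^ 2 / (4 * r)) * (1 + ‖z‖ / r) := by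
        gcongr
        exact heatKernel_le_inv_sqrt_pow_mul_exp hr z
    _ ≤ (1 + ρ) ^ n * Real.exp (-‖z‖ ^ 2 / (4 * r)) * (1 + ρ) ^ 2 := by gcongr
    _ = (1 + ρ) ^ (n + 2) * Real.exp (-c * ρ ^ 2) * Real.exp (-θ * ‖z‖ ^ 2 / (4 * r)) := by
        rw [hexp]
        ring
    _ ≤ Real.exp (3 * c) * ((n + 2).factorial / (2 * c) ^ (n + 2)) *
        Real.exp (-θ * ‖z‖ ^ 2 / (4 * r₀)) := by
        refine mul_le_mul (one_add_pow_mul_exp_neg_mul_sq_le hc₀ _ hρ₀) (Real.exp_le_exp.2 ?_)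
          (Real.exp_nonneg _) (by positivity)
        simp only [neg_mul, neg_div]
        gcongr

lemma abs_lapCommutator_heatKernel_sub_le (hr : 0 < r) {D : ℝ} (hD : ‖fderiv ℝ χ y‖ ≤ D)
    (hD' : |heatLap n χ y| ≤ D) :
    |lapCommutator χ (fun y => heatKernel n r (x - y)) y| ≤
      D * (heatKernel n r (x - y) * (1 + ‖x - y‖ / r)) := by
  have hG := heatKernel_pos hr (x - y)
  have heq : lapCommutator χ (fun y => heatKernel n r (x - y)) y =
      heatKernel n r (x - y) * (fderiv ℝ χ y (x - y) / r + heatLap n χ y) := by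
    rw [lapCommutator, (hasFDerivAt_heatKernel_sub r x y).fderiv, smul_apply, innerSL_apply_apply,
      inner_gradient_right, conj_trivial, smul_eq_mul]
    field_simp
  have hgrad : |fderiv ℝ χ y (x - y)| ≤ D * ‖x - y‖ := (fderiv ℝ χ y).le_of_opNorm_le hD _
  calc |lapCommutator χ (fun y => heatKernel n r (x - y)) y|
      ≤ heatKernel n r (x - y) * (|fderiv ℝ χ y (x - y)| / r + |heatLap n χ y|) := by
        rw [heq, abs_mul, abs_of_pos hG]
        grw [abs_add_le, abs_div, abs_of_pos hr]
    _ ≤ heatKernel n r (x - y) * (D * ‖x - y‖ / r + D) := by gcongr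
    _ = D * (heatKernel n r (x - y) * (1 + ‖x - y‖ / r)) := by ring

/-- The cutoff function `y ↦ χ (y / R)` obtained by dilating a bump function `χ` at the origin. -/
def dilatedBump (χ : ContDiffBump (0 : ES n)) (R : ℝ) (y : ES n) : ℝ := χ (R⁻¹ • y)

namespace dilatedBump

variable {R : ℝ} (χ : ContDiffBump (0 : ES n))

lemma contDiff (R : ℝ) : ContDiff ℝ 2 (dilatedBump χ R) :=
  χ.contDiff.comp (contDiff_const_smul R⁻¹)

lemma nonneg (R : ℝ) (y : ES n) : 0 ≤ dilatedBump χ R y := χ.nonneg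

lemma le_one (R : ℝ) (y : ES n) : dilatedBump χ R y ≤ 1 := χ.le_one

lemma hasCompactSupport (hR : 0 < R) : HasCompactSupport (dilatedBump χ R) :=
  χ.hasCompactSupport.comp_smul (inv_pos.2 hR).ne'

lemma eq_one (hR : 0 < R) (hy : ‖y‖ ≤ χ.rIn * R) : dilatedBump χ R y = 1 :=
  χ.one_of_mem_closedBall <| by
    rwa [mem_closedBall_zero_iff, norm_smul, Real.norm_of_nonneg (inv_pos.2 hR).le,
      inv_mul_le_iff₀ hR, mul_comm]

lemma eq_zero (hR : 0 < R) (hy : χ.rOut * R ≤ ‖y‖) : dilatedBump χ R y = 0 :=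
  χ.zero_of_le_dist <| by
    rwa [dist_zero_right, norm_smul, Real.norm_of_nonneg (inv_pos.2 hR).le, le_inv_mul_iff₀ hR,
      mul_comm]

lemma eventually_eq_one (y : ES n) : ∀ᶠ R in atTop, dilatedBump χ R y = 1 := by
  filter_upwards [eventually_gt_atTop 0, eventually_ge_atTop (‖y‖ / χ.rIn)] with R hR hyR
  exact eq_one χ hR ((div_le_iff₀' χ.rIn_pos).1 hyR)

lemma lapCommutator_eq_zero_of_norm_lt (hR : 0 < R) (hy : ‖y‖ < χ.rIn * R) (w : ES n → ℝ) :
    lapCommutator (dilatedBump χ R) w y = 0 := by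
  refine lapCommutator_eq_zero_of_eventuallyEq_const (a := 1) ?_ w
  filter_upwards [(isOpen_lt continuous_norm continuous_const).mem_nhds hy] with z hz
  exact eq_one χ hR hz.le

lemma lapCommutator_eq_zero_of_lt_norm (hR : 0 < R) (hy : χ.rOut * R < ‖y‖) (w : ES n → ℝ) :
    lapCommutator (dilatedBump χ R) w y = 0 := by
  refine lapCommutator_eq_zero_of_eventuallyEq_const (a := 0) ?_ w
  filter_upwards [(isOpen_lt continuous_const continuous_norm).mem_nhds hy] with z hz
  exact eq_zero χ hR hz.le

lemma exists_norm_fderiv_le_abs_heatLap_le :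
    ∃ D : ℝ, 0 ≤ D ∧ ∀ R, 1 ≤ R → ∀ y, ‖fderiv ℝ (dilatedBump χ R) y‖ ≤ D ∧
      |heatLap n (dilatedBump χ R) y| ≤ D := by
  have hχ : ContDiff ℝ 2 (χ : ES n → ℝ) := χ.contDiff
  obtain ⟨D₁, hD₁⟩ := (hχ.continuous_fderiv two_ne_zero).bounded_above_of_compact_support
    (χ.hasCompactSupport.fderiv ℝ)
  obtain ⟨D₂, hD₂⟩ := (continuous_heatLap hχ).bounded_above_of_compact_support
    (hasCompactSupport_heatLap χ.hasCompactSupport)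
  refine ⟨max D₁ D₂, (norm_nonneg _).trans ((hD₁ 0).trans (le_max_left _ _)), fun R hR y => ?_⟩
  have hR₀ : 0 ≤ R⁻¹ := inv_nonneg.2 (zero_le_one.trans hR)
  have hR₁ : R⁻¹ ≤ 1 := inv_le_one_of_one_le₀ hR
  constructor
  · calc ‖fderiv ℝ (dilatedBump χ R) y‖ = R⁻¹ * ‖fderiv ℝ χ (R⁻¹ • y)‖ := by
          unfold dilatedBump
          rw [fderiv_comp_smul, norm_smul, Real.norm_of_nonneg hR₀]
      _ ≤ 1 * D₁ := by gcongr; exact hD₁ _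
      _ ≤ max D₁ D₂ := by rw [one_mul]; exact le_max_left _ _
  · calc |heatLap n (dilatedBump χ R) y| = R⁻¹ ^ 2 * |heatLap n χ (R⁻¹ • y)| := by
          unfold dilatedBump
          rw [heatLap_comp_smul, abs_mul, abs_of_nonneg (by positivity)]
      _ ≤ 1 * D₂ := mul_le_mul (pow_le_one₀ hR₀ hR₁) (hD₂ _) (abs_nonneg _) zero_le_one
      _ ≤ max D₁ D₂ := by rw [one_mul]; exact le_max_right _ _

lemma exists_abs_lapCommutator_heatKernel_le (hχ : χ.rIn < 1) (r₀ : ℝ) (x : ES n) :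
    ∃ M : ℝ, 0 ≤ M ∧ ∀ᶠ R in atTop, ∀ r, 0 < r → r ≤ r₀ → ∀ y,
      |lapCommutator (dilatedBump χ R) (fun y => heatKernel n r (x - y)) y| ≤
        M * Real.exp (-χ.rIn ^ 5 * R ^ 2 / (4 * r₀)) := by
  set κ := χ.rIn
  have hκ : 0 < κ := χ.rIn_pos
  obtain ⟨C, hC, hker⟩ := exists_heatKernel_mul_one_add_norm_div_le n r₀ hκ hχ
  obtain ⟨D, hD, hcut⟩ := exists_norm_fderiv_le_abs_heatLap_le χ
  have hgap : 0 < κ - κ ^ 2 := by nlinarith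
  refine ⟨D * C, by positivity, ?_⟩
  filter_upwards [eventually_ge_atTop 1, eventually_ge_atTop (1 / κ ^ 2),
    eventually_ge_atTop (‖x‖ / (κ - κ ^ 2))] with R hR hRκ hRx r hr hrr₀ y
  rw [div_le_iff₀' (by positivity)] at hRκ hRx
  obtain hy | hy := lt_or_ge ‖y‖ (κ * R)
  · rw [lapCommutator_eq_zero_of_norm_lt χ (by linarith) hy, abs_zero]
    positivity
  have hxy : κ ^ 2 * R ≤ ‖x - y‖ := by linarith [norm_sub_norm_le y x, norm_sub_rev x y]
  have hsq : (κ ^ 2 * R) ^ 2 ≤ ‖x - y‖ ^ 2 := by gcongr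
  have hr₀ : 0 < r₀ := hr.trans_le hrr₀
  have hexp : -κ * ‖x - y‖ ^ 2 ≤ -κ ^ 5 * R ^ 2 := by nlinarith
  calc |lapCommutator (dilatedBump χ R) (fun y => heatKernel n r (x - y)) y|
      ≤ D * (heatKernel n r (x - y) * (1 + ‖x - y‖ / r)) :=
        abs_lapCommutator_heatKernel_sub_le hr (hcut R hR y).1 (hcut R hR y).2
    _ ≤ D * (C * Real.exp (-κ * ‖x - y‖ ^ 2 / (4 * r₀))) :=
        mul_le_mul_of_nonneg_left (hker r hr hrr₀ (x - y) (hRκ.trans hxy)) hD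
    _ ≤ D * (C * Real.exp (-κ ^ 5 * R ^ 2 / (4 * r₀))) := by gcongr
    _ = D * C * Real.exp (-κ ^ 5 * R ^ 2 / (4 * r₀)) := by ring

end dilatedBump

end CutoffError

section Energy

variable {Y : Type*} [MeasurableSpace Y] {μ : Measure Y} {E b C lam s : ℝ}

lemma continuousOn_setIntegral {X : Type*} [TopologicalSpace X] [FirstCountableTopology X]
    [TopologicalSpace Y] [OpensMeasurableSpace Y] [IsFiniteMeasureOnCompacts μ]
    {F : X → Y → ℝ} {J : Set X} {A K : Set Y} (hJ : IsCompact J) (hK : IsCompact K)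
    (hA : MeasurableSet A) (hAK : A ⊆ K) (hF : ContinuousOn (Function.uncurry F) (J ×ˢ K)) :
    ContinuousOn (fun τ => ∫ y in A, F τ y ∂μ) J := by
  obtain ⟨B, hB⟩ := (hJ.prod hK).exists_bound_of_continuousOn hF
  refine continuousOn_of_dominated (bound := fun _ => B) (fun τ hτ => ?_)
    (fun τ hτ => (ae_restrict_iff' hA).2 (.of_forall fun y hy => hB (τ, y) ⟨hτ, hAK hy⟩))
    (integrableOn_const ((measure_mono hAK).trans_lt hK.measure_lt_top).ne)
    ((ae_restrict_iff' hA).2 (.of_forall fun y hy => ?_))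
  · exact ContinuousOn.aestronglyMeasurable (hF.comp (Continuous.prodMk_right τ).continuousOn
      fun y hy => ⟨hτ, hAK hy⟩) hA
  · exact hF.comp (Continuous.prodMk_left y).continuousOn fun τ hτ => ⟨hτ, hAK hy⟩

lemma abs_integral_mul_le [IsFiniteMeasure μ] {f e : Y → ℝ} (hf : Integrable (fun y => f y ^ 2) μ)
    (he : ∀ y, |e y| ≤ E) (hlam : 0 < lam) :
    |∫ y, f y * e y ∂μ| ≤ E * (lam * μ.real univ + lam⁻¹ * ∫ y, f y ^ 2 ∂μ) := by
  have hamgm (y : Y) : |f y| ≤ lam + lam⁻¹ * f y ^ 2 := by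
    have hsq : 0 ≤ lam⁻¹ * (|f y| - lam) ^ 2 := by positivity
    have hexpand : lam⁻¹ * (|f y| - lam) ^ 2 = lam⁻¹ * f y ^ 2 - 2 * |f y| + lam := by
      rw [sub_sq, sq_abs]
      field_simp
    linarith [abs_nonneg (f y)]
  have hdom : Integrable (fun y => E * (lam + lam⁻¹ * f y ^ 2)) μ :=
    ((integrable_const lam).add (hf.const_mul _)).const_mul E
  calc |∫ y, f y * e y ∂μ| ≤ ∫ y, E * (lam + lam⁻¹ * f y ^ 2) ∂μ := by
        rw [← Real.norm_eq_abs]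
        refine norm_integral_le_of_norm_le hdom (.of_forall fun y => ?_)
        rw [norm_mul, mul_comm]
        exact mul_le_mul (he y) (hamgm y) (abs_nonneg _) ((abs_nonneg _).trans (he y))
    _ = E * (lam * μ.real univ + lam⁻¹ * ∫ y, f y ^ 2 ∂μ) := by
        rw [integral_const_mul, integral_add (integrable_const lam) (hf.const_mul _),
          integral_const, integral_const_mul, smul_eq_mul, mul_comm lam]

lemma abs_intervalIntegral_integral_mul_le [IsFiniteMeasure μ] {f e : ℝ → Y → ℝ} (hE : 0 ≤ E)
    (hsb : s ≤ b) (hf : ∀ τ ∈ Icc s b, Integrable (fun y => f τ y ^ 2) μ)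
    (hint : IntervalIntegrable (fun τ => ∫ y, f τ y ^ 2 ∂μ) volume s b)
    (he : ∀ τ ∈ Icc s b, ∀ y, |e τ y| ≤ E) (hlam : 0 < lam)
    (hC : ∫ τ in s..b, ∫ y, f τ y ^ 2 ∂μ ≤ (C * lam) ^ 2) :
    |∫ τ in s..b, ∫ y, f τ y * e τ y ∂μ| ≤ E * lam * ((b - s) * μ.real univ + C ^ 2) := by
  have hconst : IntervalIntegrable (fun _ => lam * μ.real univ) volume s b :=
    intervalIntegrable_const
  calc |∫ τ in s..b, ∫ y, f τ y * e τ y ∂μ|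
      ≤ ∫ τ in s..b, E * (lam * μ.real univ + lam⁻¹ * ∫ y, f τ y ^ 2 ∂μ) := by
        rw [← Real.norm_eq_abs]
        refine intervalIntegral.norm_integral_le_of_norm_le hsb (.of_forall fun τ hτ => ?_)
          ((hconst.add (hint.const_mul _)).const_mul E)
        have hτ' := Ioc_subset_Icc_self hτ
        exact abs_integral_mul_le (hf τ hτ') (he τ hτ') hlam
    _ = E * (lam * μ.real univ * (b - s) + lam⁻¹ * ∫ τ in s..b, ∫ y, f τ y ^ 2 ∂μ) := by
        rw [intervalIntegral.integral_const_mul,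
          intervalIntegral.integral_add hconst (hint.const_mul _), intervalIntegral.integral_const,
          intervalIntegral.integral_const_mul, smul_eq_mul, mul_comm (b - s)]
    _ ≤ E * (lam * μ.real univ * (b - s) + lam⁻¹ * (C * lam) ^ 2) := by gcongr
    _ = E * lam * ((b - s) * μ.real univ + C ^ 2) := by field_simp

end Energy

section Representation

variable {n : ℕ}

/- After the substitution `y = x - √r z` the kernel no longer depends on `r`, so that dominated
convergence applies. -/
lemma tendsto_heatOp_nhdsGT_zero {ι : Type*} {l : Filter ι} [l.IsCountablyGenerated] {ρ : ι → ℝ}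
    {f : ι → ES n → ℝ} {x : ES n} {a B : ℝ} (hρ : Tendsto ρ l (𝓝[>] 0))
    (hf : ∀ᶠ i in l, Continuous (f i)) (hB : ∀ᶠ i in l, ∀ y, |f i y| ≤ B)
    (ha : Tendsto (Function.uncurry f) (l ×ˢ 𝓝 x) (𝓝 a)) :
    Tendsto (fun i => heatOp n (ρ i) (f i) x) l (𝓝 a) := by
  have hlim : Tendsto (fun i => ∫ z, heatKernel n 1 z * f i (x - √(ρ i) • z)) l
      (𝓝 (∫ z, heatKernel n 1 z * a)) := by
    refine tendsto_integral_filter_of_dominated_convergence (fun z => heatKernel n 1 z * B)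
      (hf.mono fun i hi => ?_) (hB.mono fun i hi => .of_forall fun z => ?_)
      ((integrable_of_integral_eq_one (integral_heatKernel one_pos)).mul_const B)
      (.of_forall fun z => ?_)
    · exact ((continuous_heatKernel 1).mul (hi.comp (by fun_prop))).aestronglyMeasurable
    · rw [norm_mul, Real.norm_of_nonneg (heatKernel_pos one_pos z).le]
      exact mul_le_mul_of_nonneg_left (hi _) (heatKernel_pos one_pos z).le
    · have hpath : Tendsto (fun i => x - √(ρ i) • z) l (𝓝 x) := by
        have hcont : Continuous fun r : ℝ => x - √r • z := by fun_prop
        simpa only [Function.comp_def, Real.sqrt_zero, zero_smul, sub_zero] using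
          (hcont.tendsto 0).comp (hρ.mono_right nhdsWithin_le_nhds)
      exact (ha.comp (tendsto_id.prodMk hpath)).const_mul _
  rw [integral_mul_const, integral_heatKernel one_pos, one_mul] at hlim
  refine hlim.congr' ?_
  filter_upwards [hρ.eventually self_mem_nhdsWithin] with i hi
  exact (heatOp_eq_integral_heatKernel_one hi (f i) x).symm

lemma tendsto_heatGrowth_atTop_zero {q r γ : ℝ} (n : ℕ) (M C : ℝ) (hr : 0 < r) (hγ : 4 * γ < q) :
    Tendsto (fun R => M * Real.exp (-q * R ^ 2 / (4 * r)) * Real.exp (γ * R ^ 2 / r) *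
      (r * volume.real (ball (0 : ES n) R) + C ^ 2)) atTop (𝓝 0) := by
  set δ := (q / 4 - γ) / r with hδ
  have hδ₀ : 0 < δ := div_pos (by linarith) hr
  have hdecay (k : ℝ) : Tendsto (fun R : ℝ => |R| ^ k * Real.exp (-δ * R ^ 2)) atTop (𝓝 0) :=
    (tendsto_rpow_abs_mul_exp_neg_mul_sq_cocompact hδ₀ k).mono_left atTop_le_cocompact
  have hsum := ((hdecay n).const_mul (M * r * volume.real (ball (0 : ES n) 1))).add
    ((hdecay 0).const_mul (M * C ^ 2))
  rw [mul_zero, mul_zero, add_zero] at hsum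
  refine hsum.congr' ?_
  filter_upwards [eventually_gt_atTop 0] with R hR
  have hexp : Real.exp (-δ * R ^ 2) =
      Real.exp (-q * R ^ 2 / (4 * r)) * Real.exp (γ * R ^ 2 / r) := by
    rw [← Real.exp_add, hδ]
    congr 1
    field_simp
    ring
  have hvol : volume.real (ball (0 : ES n) R) = R ^ n * volume.real (ball (0 : ES n) 1) := by
    rw [Measure.real, Measure.addHaar_ball_of_pos volume 0 hR, ENNReal.toReal_mul,
      ENNReal.toReal_ofReal (by positivity), ← Measure.real, finrank_euclideanSpace_fin]
  rw [hexp, hvol, Real.rpow_natCast, Real.rpow_zero, abs_of_pos hR]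
  ring

namespace IsHeatSolutionOn

variable {I : Set ℝ} {u : ℝ → ES n → ℝ} {η : ES n → ℝ} {s t b R C E lam : ℝ}

lemma heatOp_mul_sub_heatOp_mul (hu : IsHeatSolutionOn 1 I u) (hη : ContDiff ℝ 2 η)
    (hηc : HasCompactSupport η) (hsb : s ≤ b) (hbt : b < t) (hI : Icc s b ⊆ I) (x : ES n) :
    heatOp n (t - b) (fun y => u b y * η y) x - heatOp n (t - s) (fun y => u s y * η y) x =
      ∫ τ in s..b, ∫ y, u τ y * lapCommutator η (fun y => heatKernel n (t - τ) (x - y)) y := by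
  have hopen : IsOpen (I ∩ Iio t) := hu.isOpen.inter isOpen_Iio
  have hsub : uIcc s b ⊆ I ∩ Iio t := by
    rw [uIcc_of_le hsb]
    exact fun τ hτ => ⟨hI hτ, hτ.2.trans_lt hbt⟩
  have hgreen := (hu.mono hopen inter_subset_left).integral_mul_mul_sub_integral_mul_mul
    ((isHeatSolutionOn_heatKernel_sub t x).mono hopen inter_subset_right) hη hηc hsub
  simpa only [heatOp_eq_integral_heatKernel, mul_left_comm, one_mul] using hgreen

lemma tendsto_heatOp_mul_nhdsLT (hu : IsHeatSolutionOn 1 I u) (hη : Continuous η)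
    (hηc : HasCompactSupport η) (hst : s < t) (hI : Icc s t ⊆ I) (x : ES n) :
    Tendsto (fun b => heatOp n (t - b) (fun y => u b y * η y) x) (𝓝[<] t) (𝓝 (u t x * η x)) := by
  have hIco : ∀ᶠ b in 𝓝[<] t, b ∈ Icc s t :=
    mem_of_superset (Ico_mem_nhdsLT hst) Ico_subset_Icc_self
  have hcont : ContinuousOn (fun p : ℝ × ES n => u p.1 p.2 * η p.2) (I ×ˢ univ) :=
    hu.contDiffOn.continuousOn.mul (hη.comp continuous_snd).continuousOn
  obtain ⟨B, hB⟩ := (isCompact_Icc.prod hηc).exists_bound_of_continuousOn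
    (hcont.mono (prod_mono hI (subset_univ _)))
  refine tendsto_heatOp_nhdsGT_zero (f := fun b y => u b y * η y) (B := |B|) ?_
    (hIco.mono fun b hb => (hu.contDiff (hI hb)).continuous.mul hη)
    (hIco.mono fun b hb y => ?_) ?_
  · refine tendsto_nhdsWithin_iff.2 ⟨?_, eventually_mem_nhdsWithin.mono fun b (hb : b < t) =>
      mem_Ioi.2 (sub_pos.2 hb)⟩
    exact ((continuous_sub_left t).tendsto' t 0 (sub_self t)).mono_left nhdsWithin_le_nhds
  · by_cases hy : y ∈ tsupport η
    · exact (hB (b, y) ⟨hb, hy⟩).trans (le_abs_self B)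
    · rw [image_eq_zero_of_notMem_tsupport hy, mul_zero, abs_zero]
      exact abs_nonneg B
  · have htx : I ×ˢ univ ∈ 𝓝 (t, x) :=
      (hu.isOpen.prod isOpen_univ).mem_nhds ⟨hI (right_mem_Icc.2 hst.le), mem_univ x⟩
    have hlim := (hcont.continuousAt htx).tendsto
    rw [nhds_prod_eq] at hlim
    exact hlim.mono_left (prod_mono nhdsWithin_le_nhds le_rfl)

lemma abs_integral_lapCommutator_le (hu : IsHeatSolutionOn 1 I u) (χ : ContDiffBump (0 : ES n))
    (hχ : χ.rOut < 1) (hR : 0 < R) (hE : 0 ≤ E) (hlam : 0 < lam) (hsb : s ≤ b) (hbt : b < t)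
    (hI : Icc s t ⊆ I) (hC : ∫ τ in Ioo s t, ∫ y in ball 0 R, u τ y ^ 2 ≤ (C * lam) ^ 2)
    {w : ℝ → ES n → ℝ} (hw : ∀ τ ∈ Icc s b, ∀ y, |lapCommutator (dilatedBump χ R) (w τ) y| ≤ E) :
    |∫ τ in s..b, ∫ y, u τ y * lapCommutator (dilatedBump χ R) (w τ) y| ≤
      E * lam * ((t - s) * volume.real (ball (0 : ES n) R) + C ^ 2) := by
  have hst : s ≤ t := hsb.trans hbt.le
  have hball (τ : ℝ) : ∫ y, u τ y * lapCommutator (dilatedBump χ R) (w τ) y =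
      ∫ y in ball 0 R, u τ y * lapCommutator (dilatedBump χ R) (w τ) y := by
    refine (setIntegral_eq_integral_of_forall_compl_eq_zero fun y hy => ?_).symm
    have hRy : R ≤ ‖y‖ := by simpa only [mem_ball_zero_iff, not_lt] using hy
    rw [dilatedBump.lapCommutator_eq_zero_of_lt_norm χ hR
      ((mul_lt_of_lt_one_left hR hχ).trans_le hRy), mul_zero]
  have hslice : ∀ τ ∈ Icc s t, IntegrableOn (fun y => u τ y ^ 2) (ball 0 R) := fun τ hτ =>
    (((hu.contDiff (hI hτ)).continuous.pow 2).continuousOn.integrableOn_compact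
      (isCompact_closedBall 0 R)).mono_set ball_subset_closedBall
  have hint : IntervalIntegrable (fun τ => ∫ y in ball 0 R, u τ y ^ 2) volume s t :=
    (continuousOn_setIntegral isCompact_Icc (isCompact_closedBall 0 R) measurableSet_ball
      ball_subset_closedBall ((hu.contDiffOn.continuousOn.mono
        (prod_mono hI (subset_univ _))).pow 2)).intervalIntegrable_of_Icc hst
  have hCb : ∫ τ in s..b, ∫ y in ball 0 R, u τ y ^ 2 ≤ (C * lam) ^ 2 := by
    refine (intervalIntegral.integral_mono_interval le_rfl hsb hbt.le
      (.of_forall fun τ => integral_nonneg fun y => sq_nonneg _) hint).trans ?_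
    rwa [intervalIntegral.integral_of_le hst, integral_Ioc_eq_integral_Ioo]
  have : IsFiniteMeasure (volume.restrict (ball (0 : ES n) R)) :=
    ⟨by simpa only [Measure.restrict_apply_univ] using measure_ball_lt_top⟩
  simp only [hball]
  refine (abs_intervalIntegral_integral_mul_le hE hsb
    (fun τ hτ => hslice τ (Icc_subset_Icc_right hbt.le hτ))
    (hint.mono_set (uIcc_subset_uIcc_left (by rw [uIcc_of_le hst]; exact ⟨hsb, hbt.le⟩)))
    hw hlam hCb).trans ?_
  rw [measureReal_restrict_apply_univ]
  gcongr

lemma abs_mul_sub_heatOp_mul_le (hu : IsHeatSolutionOn 1 I u) (χ : ContDiffBump (0 : ES n))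
    (hχ : χ.rOut < 1) (hR : 0 < R) (hE : 0 ≤ E) (hlam : 0 < lam) (hst : s < t) (hI : Icc s t ⊆ I)
    (hC : ∫ τ in Ioo s t, ∫ y in ball 0 R, u τ y ^ 2 ≤ (C * lam) ^ 2) {x : ES n}
    (hker : ∀ r, 0 < r → r ≤ t - s → ∀ y,
      |lapCommutator (dilatedBump χ R) (fun y => heatKernel n r (x - y)) y| ≤ E) :
    |u t x * dilatedBump χ R x - heatOp n (t - s) (fun y => u s y * dilatedBump χ R y) x| ≤
      E * lam * ((t - s) * volume.real (ball (0 : ES n) R) + C ^ 2) := by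
  have hη : ContDiff ℝ 2 (dilatedBump χ R) := dilatedBump.contDiff χ R
  have hηc := dilatedBump.hasCompactSupport χ hR
  refine le_of_tendsto ((hu.tendsto_heatOp_mul_nhdsLT hη.continuous hηc hst hI x).sub_const
    (heatOp n (t - s) (fun y => u s y * dilatedBump χ R y) x)).abs ?_
  filter_upwards [Ico_mem_nhdsLT hst] with b hb
  rw [hu.heatOp_mul_sub_heatOp_mul hη hηc hb.1 hb.2 ((Icc_subset_Icc_right hb.2.le).trans hI)]
  exact hu.abs_integral_lapCommutator_le χ hχ hR hE hlam hb.1 hb.2 hI hC fun τ hτ =>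
    hker _ (sub_pos.2 (hτ.2.trans_lt hb.2)) (sub_le_sub_left hτ.1 t)

end IsHeatSolutionOn

lemma tendsto_heatOp_mul_dilatedBump (χ : ContDiffBump (0 : ES n)) {v : ES n → ℝ} {r : ℝ}
    {x : ES n} (hint : Integrable fun y => heatKernel n r (x - y) * v y) :
    Tendsto (fun R => heatOp n r (fun y => v y * dilatedBump χ R y) x) atTop
      (𝓝 (heatOp n r v x)) := by
  simp only [heatOp_eq_integral_heatKernel, ← mul_assoc]
  refine tendsto_integral_filter_of_dominated_convergence
    (fun y => ‖heatKernel n r (x - y) * v y‖) (.of_forall fun R => ?_)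
    (.of_forall fun R => .of_forall fun y => ?_) hint.norm (.of_forall fun y => ?_)
  · exact hint.aestronglyMeasurable.mul
      (dilatedBump.contDiff χ R).continuous.aestronglyMeasurable
  · rw [norm_mul, Real.norm_of_nonneg (dilatedBump.nonneg χ R y)]
    exact mul_le_of_le_one_right (norm_nonneg _) (dilatedBump.le_one χ R y)
  · refine tendsto_const_nhds.congr' ?_
    filter_upwards [dilatedBump.eventually_eq_one χ y] with R hRy
    rw [hRy, mul_one]

lemma exists_contDiffBump_lt_rIn_pow {a : ℝ} (ha : a < 1) (k : ℕ) :
    ∃ χ : ContDiffBump (0 : ES n), χ.rIn < 1 ∧ χ.rOut < 1 ∧ a < χ.rIn ^ k := by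
  have hlim : Tendsto (fun κ : ℝ => κ ^ k) (𝓝[<] 1) (𝓝 1) := by
    simpa only [one_pow] using ((continuous_pow k).tendsto (1 : ℝ)).mono_left nhdsWithin_le_nhds
  obtain ⟨κ, haκ, hκ⟩ := ((hlim.eventually_const_lt ha).and (Ioo_mem_nhdsLT one_pos)).exists
  exact ⟨⟨κ, (κ + 1) / 2, hκ.1, by linarith [hκ.2]⟩, hκ.2, by linarith [hκ.2], haκ⟩

theorem IsHeatSolutionOn.eq_heatOp {I : Set ℝ} {u : ℝ → ES n → ℝ} {s t γ C : ℝ}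
    (hu : IsHeatSolutionOn 1 I u) (hst : s < t) (hI : Icc s t ⊆ I) (hγ : γ < 1 / 4)
    (hsize : ∀ R > 0, √(∫ τ in Ioo s t, ∫ y in ball 0 R, u τ y ^ 2) ≤
      C * Real.exp (γ * R ^ 2 / (t - s))) {x : ES n}
    (hint : Integrable fun y => heatKernel n (t - s) (x - y) * u s y) :
    u t x = heatOp n (t - s) (u s) x := by
  obtain ⟨χ, hin, hout, hγχ⟩ := exists_contDiffBump_lt_rIn_pow (n := n)
    (show 4 * γ < 1 by linarith) 5
  obtain ⟨M, hM, hker⟩ := dilatedBump.exists_abs_lapCommutator_heatKernel_le χ hin (t - s) x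
  have hbump : Tendsto (fun R => u t x * dilatedBump χ R x) atTop (𝓝 (u t x)) := by
    refine tendsto_const_nhds.congr' ?_
    filter_upwards [dilatedBump.eventually_eq_one χ x] with R hRx
    rw [hRx, mul_one]
  have herr : ∀ᶠ R in atTop,
      |u t x * dilatedBump χ R x - heatOp n (t - s) (fun y => u s y * dilatedBump χ R y) x| ≤
        M * Real.exp (-χ.rIn ^ 5 * R ^ 2 / (4 * (t - s))) * Real.exp (γ * R ^ 2 / (t - s)) *
          ((t - s) * volume.real (ball (0 : ES n) R) + C ^ 2) := by
    filter_upwards [hker, eventually_gt_atTop 0] with R hkerR hR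
    exact hu.abs_mul_sub_heatOp_mul_le χ hout hR (by positivity) (Real.exp_pos _) hst hI
      (Real.sqrt_le_iff.1 (hsize R hR)).2 hkerR
  refine sub_eq_zero.1 (abs_nonpos_iff.1 (le_of_tendsto_of_tendsto
    (hbump.sub (tendsto_heatOp_mul_dilatedBump χ hint)).abs ?_ herr))
  exact tendsto_heatGrowth_atTop_zero n M C (sub_pos.2 hst) hγχ

theorem IsHeatSolutionOn.integrable_mul_and_integral_mul_eq {I : Set ℝ} {u : ℝ → ES n → ℝ}
    {s t γ C : ℝ} (hu : IsHeatSolutionOn 1 I u) (hst : s < t) (hI : Icc s t ⊆ I) (hγ : γ < 1 / 4)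
    (hsize : ∀ R > 0, √(∫ τ in Ioo s t, ∫ y in ball 0 R, u τ y ^ 2) ≤
      C * Real.exp (γ * R ^ 2 / (t - s)))
    (hint : ∀ φ : 𝓢(ES n, ℝ), Integrable fun x => u s x * φ x) (φ : 𝓢(ES n, ℝ)) :
    Integrable (fun x => u t x * φ x) ∧
      ∫ x, u t x * φ x = ∫ x, u s x * heatSchwartz (t - s) φ x := by
  have hr : 0 < t - s := sub_pos.2 hst
  have hcont : Continuous (u s) := (hu.contDiff (hI (left_mem_Icc.2 hst.le))).continuous
  have hflow : u t = heatOp n (t - s) (u s) :=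
    funext fun x => hu.eq_heatOp hst hI hγ hsize (integrable_heatKernel_mul hint hr x)
  rw [hflow]
  exact ⟨integrable_heatOp_mul_schwartz hcont hint hr φ,
    integral_heatOp_mul_schwartz hcont hint hr φ⟩

end Representation

/-- **Representation of solutions to the heat equation.**
If `u` is a smooth solution of the heat equation on `(0,T) × ℝⁿ` satisfying the local `L²`
size condition with Gaussian-type growth `γ < 1/4`, and there is a sequence `tₖ → 0` with
`(u(tₖ))` bounded in `𝒮'(ℝⁿ)`, then there is a unique tempered distribution `u₀` with
`u(t) = e^{tΔ}u₀` for all `0 < t < T` (in the sense that `⟨u(t), φ⟩ = ⟨u₀, e^{tΔ}φ⟩` for every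
Schwartz function `φ`). -/
theorem heat_representation
    (n : ℕ) (T : ℝ≥0∞) (hT : 0 < T) (γ : ℝ) (hγ : γ ∈ Set.Ioo (0 : ℝ) (1/4))
    (u : ℝ → ES n → ℝ)
    (hu_smooth : ContDiffOn ℝ (⊤ : ℕ∞) (fun p : ℝ × ES n => u p.1 p.2)
      {p : ℝ × ES n | 0 < p.1 ∧ ENNReal.ofReal p.1 < T})
    (hu_heat : ∀ (t : ℝ) (x : ES n), 0 < t → ENNReal.ofReal t < T →
      HasDerivAt (fun τ => u τ x) (heatLap n (u t) x) t)
    -- (i) Size condition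
    (hsize : ∀ a b : ℝ, 0 < a → a < b → ENNReal.ofReal b < T → ∃ C > 0, ∀ R > 0,
      Real.sqrt (∫ t in Set.Ioo a b, ∫ x in Metric.ball (0 : ES n) R, (u t x) ^ 2) ≤
        C * Real.exp (γ * R ^ 2 / (b - a)))
    -- (ii) Uniform control: a sequence tₖ → 0 with (u(tₖ)) bounded in 𝒮'(ℝⁿ)
    (hinit : ∃ tk : ℕ → ℝ, (∀ k, 0 < tk k ∧ ENNReal.ofReal (tk k) < T) ∧
      Tendsto tk atTop (nhds 0) ∧
      ∀ φ : SchwartzMap (ES n) ℝ,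
        (∀ k, Integrable (fun x => u (tk k) x * φ x)) ∧
        ∃ A : ℝ, ∀ k, |∫ x, u (tk k) x * φ x| ≤ A) :
    ∃! u₀ : SchwartzMap (ES n) ℝ →L[ℝ] ℝ,
      ∀ t : ℝ, 0 < t → ENNReal.ofReal t < T →
        ∀ φ ψ : SchwartzMap (ES n) ℝ, (∀ x, ψ x = heatOp n t (⇑φ) x) →
          Integrable (fun x => u t x * φ x) ∧ (∫ x, u t x * φ x) = u₀ ψ := by
  obtain ⟨τ, hτ, hτ₀, hφ⟩ := hinit
  set I : Set ℝ := {t | 0 < t ∧ ENNReal.ofReal t < T}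
  have hIopen : IsOpen I := isOpen_Ioi.inter (isOpen_Iio.preimage ENNReal.continuous_ofReal)
  have hI₀ : 0 ∈ closure I := mem_closure_of_tendsto hτ₀ (.of_forall hτ)
  have hu : IsHeatSolutionOn 1 I u :=
    ⟨hIopen, (contDiffOn_infty.1 hu_smooth 2).mono fun _ hp => hp.1,
      fun t ht x => by simpa only [one_mul] using hu_heat t x ht.1 ht.2⟩
  have hflow : ∀ t ∈ I, ∀ φ : 𝓢(ES n, ℝ), ∀ᶠ k in atTop, Integrable (fun x => u t x * φ x) ∧
      ∫ x, u t x * φ x = ∫ x, u (τ k) x * heatSchwartz (t - τ k) φ x := fun t ht φ => by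
    filter_upwards [hτ₀.eventually_lt_const ht.1] with k hk
    obtain ⟨C, -, hC⟩ := hsize (τ k) t (hτ k).1 hk ht.2
    exact hu.integrable_mul_and_integral_mul_eq hk (fun σ hσ => ⟨(hτ k).1.trans_le hσ.1,
      (ENNReal.ofReal_le_ofReal hσ.2).trans_lt ht.2⟩) hγ.2 hC (fun φ => (hφ φ).1 k) φ
  choose L hL using fun k => exists_clm_eq_integral_mul (μ := volume)
    (hu.contDiff (hτ k)).continuous.locallyIntegrable fun φ => (hφ φ).1 k
  obtain ⟨u₀, hu₀⟩ := exists_clm_apply_heatSchwartz_eq (S := fun t φ => ∫ x, u t x * φ x)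
    (fun φ => by simpa only [hL] using (hφ φ).2) hτ₀ hI₀
    fun t ht φ => (hflow t ht φ).mono fun k hk => hk.2.trans (hL k _).symm
  refine ⟨u₀, fun t ht htT φ ψ hψ => ?_, fun u₁ hu₁ => clm_eq_of_apply_heatSchwartz_eq hI₀ ?_⟩
  · obtain rfl : ψ = heatSchwartz t φ :=
      SchwartzMap.ext fun x => (hψ x).trans (heatSchwartz_apply_eq_heatOp ht φ x).symm
    exact ⟨(hflow t ⟨ht, htT⟩ φ).exists.choose_spec.1, hu₀ t ⟨ht, htT⟩ φ⟩
  · exact fun t ht φ => (hu₁ t ht.1 ht.2 φ _ (heatSchwartz_apply_eq_heatOp ht.1 φ)).2.symm.trans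
      (hu₀ t ht φ)

end
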